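/- Let k be a field, let kN(n) be the quotient of the free k-algebra on generators Y_1, …, Y_{n−1} by the two-sided ideal generated by Y_i^2 (1 ≤ i ≤ n−1), Y_iY_{i+1}Y_i − Y_{i+1}Y_iY_{i+1} (1 ≤ i ≤ n−2), and Y_iY_j − Y_jY_i (|i−j| ≥ 2), and let k be the left kN(n)-module whose underlying vector space is k and on which each Y_i acts as zero. Then for every integer d ≥ 0, Ext^d_{kN(n)}(k, k) is a k-vector space of dimension binom(d + n − 2, n − 2). -/

import Mathlib

/-- Index type for the generators `Y_1, …, Y_{n-1}` of the nilCoxeter algebra `kN(n)`. -/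
abbrev NIdx (n : ℕ) := {i : ℕ // 1 ≤ i ∧ i + 1 ≤ n}

variable (k : Type) [Field k]

/-- The generator `Y_i` in the free `k`-algebra (junk value `0` outside `1 ≤ i ≤ n-1`). -/
noncomputable def Yf (n : ℕ) (i : ℕ) : FreeAlgebra k (NIdx n) :=
  if h : 1 ≤ i ∧ i + 1 ≤ n then FreeAlgebra.ι k ⟨i, h⟩ else 0

/-- The defining relations of the nilCoxeter algebra `kN(n)` of `S_n` over the field `k`:
`Y_i² = 0`, the braid relations, and the commutation relations for `|i - j| ≥ 2`. -/
inductive NRel (n : ℕ) : FreeAlgebra k (NIdx n) → FreeAlgebra k (NIdx n) → Prop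
  | sq (i : NIdx n) : NRel n (FreeAlgebra.ι k i * FreeAlgebra.ι k i) 0
  | braid (i j : NIdx n) (h : j.1 = i.1 + 1) :
      NRel n (FreeAlgebra.ι k i * FreeAlgebra.ι k j * FreeAlgebra.ι k i)
        (FreeAlgebra.ι k j * FreeAlgebra.ι k i * FreeAlgebra.ι k j)
  | comm (i j : NIdx n) (h : i.1 + 2 ≤ j.1 ∨ j.1 + 2 ≤ i.1) :
      NRel n (FreeAlgebra.ι k i * FreeAlgebra.ι k j)
        (FreeAlgebra.ι k j * FreeAlgebra.ι k i)

/-- The nilCoxeter algebra `kN(n)` of the symmetric group `S_n` over the field `k`. -/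
abbrev Nring (n : ℕ) := RingQuot (NRel k n)

/-- The augmentation `kN(n) → k`, sending every generator `Y_i` to `0`. -/
noncomputable def Naug (n : ℕ) : Nring k n →ₐ[k] k :=
  RingQuot.liftAlgHom k ⟨FreeAlgebra.lift k (fun _ : NIdx n => (0 : k)), by
    rintro x y h
    induction h <;> simp⟩

namespace NilCox

section Coh
variable (k : Type) {A : Type} [Field k] [Ring A]
  {C : ℕ → Type} [∀ n, AddCommGroup (C n)] [∀ n, Module A (C n)]

/-- An augmented projective resolution `… → C 2 → C 1 → C 0 → 0`. -/
structure IsRes (D : ∀ n, C (n + 1) →ₗ[A] C n) : Prop where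
  exact : ∀ n, Function.Exact (D (n + 1)) (D n)
  surj : Function.Surjective (D 0)
  proj : ∀ n, Module.Projective A (C (n + 1))

variable (D : ∀ n, C (n + 1) →ₗ[A] C n)
  (X : Type) [AddCommGroup X] [Module k X] [Module A X] [SMulCommClass A k X]

/-- Precomposition with a linear map. -/
def precomp {M N : Type} [AddCommGroup M] [AddCommGroup N] [Module A M] [Module A N]
    (f : M →ₗ[A] N) : (N →ₗ[A] X) →ₗ[k] (M →ₗ[A] X) where
  toFun φ := φ ∘ₗ f
  map_add' _ _ := rfl
  map_smul' _ _ := rfl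

/-- Postcomposition with a linear map. -/
def postcomp {X : Type} [AddCommGroup X] [Module k X] [Module A X] [SMulCommClass A k X]
    {Y : Type} [AddCommGroup Y] [Module k Y] [Module A Y] [SMulCommClass A k Y]
    {M : Type} [AddCommGroup M] [Module A M]
    (f : X →ₗ[A] Y) (hf : ∀ (c : k) x, f (c • x) = c • f x) :
    (M →ₗ[A] X) →ₗ[k] (M →ₗ[A] Y) where
  toFun φ := f ∘ₗ φ
  map_add' _ _ := by ext; simp
  map_smul' c φ := by ext x; simp [hf]

/-- Cocycles. -/
def Zc (n : ℕ) : Submodule k (C (n + 1) →ₗ[A] X) :=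
  LinearMap.ker (precomp k X (D (n + 1)))

/-- Coboundaries. -/
def Bc : (n : ℕ) → Submodule k (C (n + 1) →ₗ[A] X)
  | 0 => ⊥
  | n + 1 => LinearMap.range (precomp k X (D (n + 1)))

/-- Cohomology. -/
abbrev Hc (n : ℕ) : Type := (Zc k D X n) ⧸ (Bc k D X n).comap (Zc k D X n).subtype

variable {D} {X}
lemma mem_Zc {n : ℕ} {φ : C (n + 1) →ₗ[A] X} :
    φ ∈ Zc k D X n ↔ ∀ y, φ (D (n + 1) y) = 0 := by
  constructor
  · intro h y
    exact LinearMap.congr_fun (LinearMap.mem_ker.1 h) y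
  · intro h
    exact LinearMap.mem_ker.2 (LinearMap.ext h)

lemma mem_Bc_succ {n : ℕ} {φ : C (n + 2) →ₗ[A] X} :
    φ ∈ Bc k D X (n + 1) ↔ ∃ ψ : C (n + 1) →ₗ[A] X, ∀ y, φ y = ψ (D (n + 1) y) := by
  constructor
  · rintro ⟨ψ, rfl⟩
    exact ⟨ψ, fun _ => rfl⟩
  · rintro ⟨ψ, h⟩
    exact ⟨ψ, LinearMap.ext fun y => (h y).symm⟩

lemma mem_Bc_zero {φ : C 1 →ₗ[A] X} : φ ∈ Bc k D X 0 ↔ φ = 0 := Iff.rfl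

lemma IsRes.dd (hD : IsRes D) (n : ℕ) (y) : D n (D (n + 1) y) = 0 := (hD.exact n).apply_apply_eq_zero y

/-- Linear equivalence criterion on ranks of cohomology: if `F` maps hom spaces bijectively compatibly. -/
lemma rank_sub_quot {V W : Type} [AddCommGroup V] [Module k V] [AddCommGroup W] [Module k W]
    (F : V →ₗ[k] W) (Z B : Submodule k V) (Z' B' : Submodule k W)
    (hB' : B' ≤ Z')
    (hZ : ∀ z ∈ Z, F z ∈ Z') (hsurj : ∀ z' ∈ Z', ∃ z ∈ Z, F z - z' ∈ B')
    (hinj : ∀ z ∈ Z, (F z ∈ B' ↔ z ∈ B)) :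
    Module.rank k (Z ⧸ B.comap Z.subtype) = Module.rank k (Z' ⧸ B'.comap Z'.subtype) := by
  let G : Z →ₗ[k] Z' := F.restrict hZ
  let Q : Z →ₗ[k] (Z' ⧸ B'.comap Z'.subtype) := (Submodule.mkQ _) ∘ₗ G
  have hker : LinearMap.ker Q = B.comap Z.subtype := by
    ext z
    simp only [Q, LinearMap.mem_ker, LinearMap.comp_apply, Submodule.mkQ_apply,
      Submodule.Quotient.mk_eq_zero, Submodule.mem_comap]
    exact hinj z z.2
  have hs : Function.Surjective Q := by
    intro w
    obtain ⟨w, rfl⟩ := Submodule.mkQ_surjective _ w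
    obtain ⟨z, hz, h⟩ := hsurj w w.2
    refine ⟨⟨z, hz⟩, ?_⟩
    simp only [Q, LinearMap.comp_apply, Submodule.mkQ_apply]
    rw [Submodule.Quotient.eq]
    exact h
  rw [← hker]
  exact (Q.quotKerEquivOfSurjective hs).rank_eq

lemma Bc_le_Zc (hD : IsRes D) (n : ℕ) : Bc k D X n ≤ Zc k D X n := by
  intro φ hφ
  rw [mem_Zc]
  intro y
  cases n with
  | zero => rw [mem_Bc_zero] at hφ; simp [hφ]
  | succ n =>
    obtain ⟨ψ, h⟩ := (mem_Bc_succ k).1 hφ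
    rw [h, hD.dd, map_zero]

section LES
variable {Y W : Type} [AddCommGroup Y] [Module k Y] [Module A Y] [SMulCommClass A k Y]
  [AddCommGroup W] [Module k W] [Module A W] [SMulCommClass A k W]
  (f : X →ₗ[A] Y) (g : Y →ₗ[A] W)
  (hfk : ∀ (c : k) x, f (c • x) = c • f x) (hgk : ∀ (c : k) x, g (c • x) = c • g x)
  (hf : Function.Injective f) (hg : Function.Surjective g) (hfg : Function.Exact f g)
  (hs : ∀ n, ∀ φ ∈ Zc k D Y n, ∃ φ' ∈ Zc k D X n, f ∘ₗ φ' - φ ∈ Bc k D Y n)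

include hfg hf in
lemma factor_f {M : Type} [AddCommGroup M] [Module A M] (ψ : M →ₗ[A] Y) (h : ∀ x, g (ψ x) = 0) :
    ∃ χ : M →ₗ[A] X, ∀ x, f (χ x) = ψ x := by
  have : ∀ x, ∃ y, f y = ψ x := fun x => (hfg (ψ x)).1 (h x)
  choose χ hχ using this
  refine ⟨{ toFun := χ, map_add' := ?_, map_smul' := ?_ }, hχ⟩
  · intro x y; apply hf; simp [hχ]
  · intro a x; apply hf; simp [hχ]

include hfk hf hfg hs in
theorem rank_H_zero (hD : IsRes D) :
    Module.rank k (Hc k D X 0) = Module.rank k (Hc k D Y 0) := by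
  apply rank_sub_quot k (postcomp k f hfk) _ _ _ _ (Bc_le_Zc k hD 0)
  · intro z hz
    rw [mem_Zc] at hz ⊢
    intro y
    show f (z _) = 0
    rw [hz, map_zero]
  · intro z hz
    exact hs 0 z hz
  · intro z hz
    rw [mem_Bc_zero, mem_Bc_zero]
    constructor
    · intro h
      ext x
      apply hf
      rw [LinearMap.zero_apply, map_zero]
      exact LinearMap.congr_fun h x
    · rintro rfl; ext; simp [postcomp]

include hfk hgk hf hg hfg hs in
theorem rank_H_succ (hD : IsRes D) (n : ℕ) :
    Module.rank k (Hc k D X (n + 1)) =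
      Module.rank k (Hc k D Y (n + 1)) + Module.rank k (Hc k D W n) := by
  classical
  -- the map on cohomology
  let F := postcomp (M := C (n + 2)) k f hfk
  have hFZ : ∀ z ∈ Zc k D X (n + 1), F z ∈ Zc k D Y (n + 1) := by
    intro z hz
    rw [mem_Zc] at hz ⊢
    intro y
    show f (z _) = 0
    rw [hz, map_zero]
  have hFB : ∀ z ∈ Bc k D X (n + 1), F z ∈ Bc k D Y (n + 1) := by
    intro z hz
    obtain ⟨ψ, h⟩ := (mem_Bc_succ k).1 hz
    refine (mem_Bc_succ k).2 ⟨f ∘ₗ ψ, fun y => ?_⟩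
    show f (z y) = f (ψ _)
    rw [h]
  -- K = cocycles of X that become coboundaries in Y
  let K : Submodule k (C (n + 2) →ₗ[A] X) := Zc k D X (n + 1) ⊓ (Bc k D Y (n + 1)).comap F
  have hBK : Bc k D X (n + 1) ≤ K := fun z hz => ⟨Bc_le_Zc k hD _ hz, hFB z hz⟩
  have h1 : Module.rank k (Hc k D X (n + 1)) =
      Module.rank k (Hc k D Y (n + 1)) + Module.rank k (K ⧸ (Bc k D X (n + 1)).comap K.subtype) := by
    let G : Zc k D X (n + 1) →ₗ[k] Zc k D Y (n + 1) := F.restrict hFZ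
    have hGB : (Bc k D X (n + 1)).comap (Zc k D X (n + 1)).subtype ≤
        ((Bc k D Y (n + 1)).comap (Zc k D Y (n + 1)).subtype).comap G := fun z hz => hFB _ hz
    let Q : Hc k D X (n + 1) →ₗ[k] Hc k D Y (n + 1) :=
      Submodule.mapQ _ _ G hGB
    have hQ : Function.Surjective Q := by
      intro w
      obtain ⟨w, rfl⟩ := Submodule.mkQ_surjective _ w
      obtain ⟨z, hz, h⟩ := hs (n + 1) w w.2
      refine ⟨Submodule.mkQ _ ⟨z, hz⟩, ?_⟩
      simp only [Q, Submodule.mkQ_apply, Submodule.mapQ_apply]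
      rw [Submodule.Quotient.eq]
      exact h
    have h2 := LinearMap.rank_range_add_rank_ker Q
    rw [LinearMap.range_eq_top.2 hQ, rank_top] at h2
    rw [← h2]
    congr 1
    -- ker Q versus K / B
    let R : K →ₗ[k] Hc k D X (n + 1) :=
      (Submodule.mkQ _) ∘ₗ (Submodule.inclusion (inf_le_left : K ≤ Zc k D X (n + 1)))
    have hRk : LinearMap.ker R = (Bc k D X (n + 1)).comap K.subtype := by
      ext z
      simp only [R, LinearMap.mem_ker, LinearMap.comp_apply, Submodule.mkQ_apply,
        Submodule.Quotient.mk_eq_zero, Submodule.mem_comap]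
      rfl
    have hRr : LinearMap.range R = LinearMap.ker Q := by
      ext w
      constructor
      · rintro ⟨z, rfl⟩
        simp only [R, Q, LinearMap.mem_ker, LinearMap.comp_apply, Submodule.mkQ_apply,
          Submodule.mapQ_apply, Submodule.Quotient.mk_eq_zero, Submodule.mem_comap]
        exact z.2.2
      · obtain ⟨z, rfl⟩ := Submodule.mkQ_surjective _ w
        intro hz
        simp only [Q, LinearMap.mem_ker, Submodule.mkQ_apply,
          Submodule.mapQ_apply, Submodule.Quotient.mk_eq_zero, Submodule.mem_comap] at hz
        exact ⟨⟨z.1, z.2, hz⟩, rfl⟩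
    rw [← hRk, ← hRr]
    exact (LinearMap.quotKerEquivRange R).rank_eq.symm
  rw [h1]
  congr 1
  -- T
  let T : Submodule k (C (n + 1) →ₗ[A] Y) := (Zc k D W n).comap (postcomp k g hgk)
  let T0 : Submodule k (C (n + 1) →ₗ[A] Y) := (Bc k D W n).comap (postcomp k g hgk)
  haveI := hD.proj
  have e1 : Module.rank k (T ⧸ T0.comap T.subtype) = Module.rank k (Hc k D W n) := by
    apply rank_sub_quot k (postcomp k g hgk) _ _ _ _ (Bc_le_Zc k hD n)
    · exact fun z hz => hz
    · intro z hz
      obtain ⟨ψ, hψ⟩ := Module.projective_lifting_property g z hg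
      refine ⟨ψ, ?_, ?_⟩
      · have hψ' : postcomp k g hgk ψ = z := hψ
        show postcomp k g hgk ψ ∈ Zc k D W n
        rw [hψ']; exact hz
      · have hψ' : postcomp k g hgk ψ = z := hψ
        rw [hψ', sub_self]; exact Submodule.zero_mem _
    · exact fun z hz => Iff.rfl
  rw [← e1]
  have hT : ∀ ψ ∈ T, ∀ x, g (ψ (D (n + 1) x)) = 0 := fun ψ hψ x => (mem_Zc k).1 hψ x
  -- compare in Y-cochains
  have e2 : Module.rank k (K ⧸ (Bc k D X (n + 1)).comap K.subtype) =
      Module.rank k (↥(K.map F) ⧸ ((Bc k D X (n + 1)).map F).comap (K.map F).subtype) := by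
    have hFi : Function.Injective F := by
      intro a b hab
      ext x
      exact hf (LinearMap.congr_fun hab x)
    apply rank_sub_quot k F _ _ _ _ (Submodule.map_mono hBK)
    · exact fun z hz => Submodule.mem_map_of_mem hz
    · rintro _ ⟨z, hz, rfl⟩
      exact ⟨z, hz, by rw [sub_self]; exact Submodule.zero_mem _⟩
    · intro z hz
      constructor
      · rintro ⟨w, hw, h⟩
        rw [← hFi h]; exact hw
      · exact fun h => Submodule.mem_map_of_mem h
  rw [e2]
  symm
  apply rank_sub_quot k (precomp k Y (D (n + 1))) _ _ _ _ (Submodule.map_mono hBK)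
  · intro ψ hψ
    obtain ⟨χ, hχ⟩ := factor_f f g hf hfg (ψ ∘ₗ D (n + 1)) (hT ψ hψ)
    refine ⟨χ, ⟨?_, ?_⟩, ?_⟩
    · rw [SetLike.mem_coe, mem_Zc]
      intro y
      apply hf
      rw [hχ, LinearMap.comp_apply, hD.dd, map_zero, map_zero]
    · refine (mem_Bc_succ k).2 ⟨ψ, fun y => hχ y⟩
    · exact LinearMap.ext hχ
  · rintro _ ⟨χ, ⟨_, hχ⟩, rfl⟩
    obtain ⟨ψ, hψ⟩ := (mem_Bc_succ k).1 hχ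
    refine ⟨ψ, ?_, ?_⟩
    · show _ ∈ Zc k D W n
      rw [mem_Zc]
      intro y
      show g (ψ _) = 0
      rw [← hψ]
      exact hfg.apply_apply_eq_zero _
    · have : precomp k Y (D (n + 1)) ψ - F χ = 0 := by
        ext y
        simp only [LinearMap.sub_apply, LinearMap.zero_apply]
        rw [sub_eq_zero]
        exact (hψ y).symm
      rw [this]; exact Submodule.zero_mem _
  · intro ψ hψ
    constructor
    · rintro ⟨z, hz, h⟩
      obtain ⟨χ, hχ⟩ := (mem_Bc_succ k).1 hz
      have h3 : ψ - f ∘ₗ χ ∈ Zc k D Y n := by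
        rw [mem_Zc]
        intro y
        have := LinearMap.congr_fun h y
        change f (z y) = ψ _ at this
        simp [← this, hχ]
      obtain ⟨φ', _, hφ⟩ := hs n _ h3
      show postcomp k g hgk ψ ∈ Bc k D W n
      cases n with
      | zero =>
        rw [mem_Bc_zero] at hφ ⊢
        ext y
        have := LinearMap.congr_fun hφ y
        simp only [LinearMap.sub_apply, LinearMap.comp_apply, LinearMap.zero_apply] at this
        show g (ψ y) = 0
        have h4 : ψ y = f (φ' y + χ y) := by
          rw [map_add]
          rw [sub_eq_zero] at this
          rw [this]; simp
        rw [h4]; exact hfg.apply_apply_eq_zero _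
      | succ n =>
        obtain ⟨η, hη⟩ := (mem_Bc_succ k).1 hφ
        refine (mem_Bc_succ k).2 ⟨-(g ∘ₗ η), fun y => ?_⟩
        have := hη y
        simp only [LinearMap.sub_apply, LinearMap.comp_apply] at this
        have h4 : ψ y = f (φ' y + χ y) - η (D (n + 1) y) := by
          rw [← this, map_add]; abel
        show g (ψ y) = -(g (η _))
        rw [h4, map_sub, hfg.apply_apply_eq_zero, zero_sub]
    · intro h
      change postcomp k g hgk ψ ∈ Bc k D W n at h
      suffices h5 : ∃ χ : C (n + 1) →ₗ[A] X, ∀ x, ψ (D (n + 1) x) = f (χ (D (n + 1) x)) by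
        obtain ⟨χ, hχ⟩ := h5
        refine ⟨χ ∘ₗ D (n + 1), (mem_Bc_succ k).2 ⟨χ, fun _ => rfl⟩, ?_⟩
        ext x
        exact (hχ x).symm
      cases n with
      | zero =>
        rw [mem_Bc_zero] at h
        obtain ⟨χ, hχ⟩ := factor_f f g hf hfg ψ (fun x => LinearMap.congr_fun h x)
        exact ⟨χ, fun x => (hχ _).symm⟩
      | succ n =>
        obtain ⟨ζ, hζ⟩ := (mem_Bc_succ k).1 h
        obtain ⟨η, hη⟩ := Module.projective_lifting_property g ζ hg
        obtain ⟨χ, hχ⟩ := factor_f f g hf hfg (ψ - η ∘ₗ D (n + 1)) (fun x => by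
          have h6 : g (η (D (n + 1) x)) = ζ (D (n + 1) x) := LinearMap.congr_fun hη _
          have h7 : g (ψ x) = ζ (D (n + 1) x) := hζ x
          simp [h6, h7])
        refine ⟨χ, fun x => ?_⟩
        rw [hχ]
        simp [hD.dd]

end LES
end Coh
end NilCox

namespace NilCox

lemma exists_seq {α : ℕ → Type} (G : ∀ n, α n → Prop) (R : ∀ n, α n → α (n + 1) → Prop)
    (a0 : α 0) (h0 : G 0 a0) (hstep : ∀ n a, G n a → ∃ a', R n a a' ∧ G (n + 1) a') :
    ∃ s : ∀ n, α n, s 0 = a0 ∧ ∀ n, R n (s n) (s (n + 1)) := by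
  choose f hf hg using hstep
  let t : ∀ n, {a : α n // G n a} := fun n => Nat.rec (motive := fun n => {a : α n // G n a})
    ⟨a0, h0⟩ (fun n a => ⟨f n a.1 a.2, hg n a.1 a.2⟩) n
  exact ⟨fun n => (t n).1, rfl, fun n => hf n _ _⟩

lemma lift_range {A P M N : Type} [Ring A] [AddCommGroup P] [AddCommGroup M] [AddCommGroup N]
    [Module A P] [Module A M] [Module A N] [Module.Projective A P]
    (f : M →ₗ[A] N) (g : P →ₗ[A] N) (h : ∀ x, ∃ y, f y = g x) :
    ∃ g' : P →ₗ[A] M, ∀ x, f (g' x) = g x := by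
  obtain ⟨g', hg'⟩ := Module.projective_lifting_property f.rangeRestrict
    (g.codRestrict (LinearMap.range f) h) f.surjective_rangeRestrict
  refine ⟨g', fun x => ?_⟩
  have := congrArg Subtype.val (LinearMap.congr_fun hg' x)
  exact this

/-- Twist of a module by a ring endomorphism. -/
def Tw {A : Type} [Ring A] (σ : A →+* A) (N : Type) : Type := N

instance {A : Type} [Ring A] (σ : A →+* A) (N : Type) [h : AddCommGroup N] :
    AddCommGroup (Tw σ N) := h

instance {A : Type} [Ring A] (σ : A →+* A) (N : Type) [AddCommGroup N] [h : Module A N] :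
    Module A (Tw σ N) := Module.compHom N σ

lemma lift_range_semi {A P M N : Type} [Ring A] [AddCommGroup P] [AddCommGroup M] [AddCommGroup N]
    [Module A P] [Module A M] [Module A N] [Module.Projective A P] (σ : A →+* A)
    (f : M →ₗ[A] N) (g : P →ₛₗ[σ] N) (h : ∀ x, ∃ y, f y = g x) :
    ∃ g' : P →ₛₗ[σ] M, ∀ x, f (g' x) = g x := by
  let f1 : Tw σ M →ₗ[A] Tw σ N :=
    { toFun := fun x => f x, map_add' := fun x y => f.map_add x y,
      map_smul' := fun a x => f.map_smul (σ a) x }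
  let g1 : P →ₗ[A] Tw σ N :=
    { toFun := fun x => g x, map_add' := fun x y => g.map_add x y,
      map_smul' := fun a x => g.map_smulₛₗ a x }
  obtain ⟨g', hg'⟩ := lift_range f1 g1 h
  refine ⟨{ toFun := fun x => g' x, map_add' := fun x y => g'.map_add x y,
            map_smul' := fun a x => g'.map_smul a x }, hg'⟩

lemma proj_restrict {A B P : Type} [Ring A] [Ring B] [AddCommGroup P] [Module A P] [Module B P]
    (i : B →+* A) (hc : ∀ (b : B) (x : P), b • x = i b • x) [Module.Projective A P]
    (hA : letI := Module.compHom A i; Module.Free B A) : Module.Projective B P := by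
  letI : Module B A := Module.compHom A i
  have hBA : ∀ (b : B) (a : A), b • a = i b * a := fun _ _ => rfl
  haveI : Module.Free B A := hA
  obtain ⟨s, hs⟩ := Module.projective_def'.1 (inferInstance : Module.Projective A P)
  let s' : P →ₗ[B] (P →₀ A) :=
    { toFun := s, map_add' := s.map_add, map_smul' := fun b x => by
        rw [hc, s.map_smul]; ext y; simp [hBA] }
  let t' : (P →₀ A) →ₗ[B] P :=
    { toFun := Finsupp.linearCombination A id, map_add' := map_add _, map_smul' := fun b x => by
        have : b • x = i b • x := by ext y; simp [hBA]
        rw [this, map_smul, RingHom.id_apply, hc] }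
  exact Module.Projective.of_split s' t' (by
    ext x
    exact LinearMap.congr_fun hs x)

section Shapiro
variable (k : Type) {A B : Type} [Field k] [Ring A] [Ring B]
  {C : ℕ → Type} [∀ n, AddCommGroup (C n)] [∀ n, Module A (C n)] [∀ n, Module B (C n)]
  (i : B →+* A) (r : A →+* B)
  {D : ∀ n, C (n + 1) →ₗ[A] C n} {D' : ∀ n, C (n + 1) →ₗ[B] C n}
  (hri : ∀ b, r (i b) = b)
  (hc : ∀ n (b : B) (x : C n), b • x = i b • x)
  (hDD : ∀ n x, D' n x = D n x)
  [Module A k] [Module B k] [SMulCommClass A k k] [SMulCommClass B k k]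
  (hAk : ∀ (a : A) (c : k), a • c = r a • c)
  {V : Type} [AddCommGroup V] [Module k V] [Module A V] [SMulCommClass A k V]
  (lam : V →ₗ[k] k) (hlam : ∀ (b : B) v, lam (i b • v) = b • lam v)
  (hV : ∀ g : A →+ k, (∀ b a, g (i b * a) = b • g a) → ∃ v, ∀ a, g a = lam (a • v))
  (hV0 : ∀ v, (∀ a : A, lam (a • v) = 0) → v = 0)

include hV hV0 in
lemma shapiro_lift {P : Type} [AddCommGroup P] [Module A P] [Module B P]
    (hc : ∀ (b : B) (x : P), b • x = i b • x) (ψ : P →ₗ[B] k) :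
    ∃ φ : P →ₗ[A] V, ∀ x, lam (φ x) = ψ x := by
  have key : ∀ x : P, ∃ v, ∀ a : A, ψ (a • x) = lam (a • v) := by
    intro x
    exact hV { toFun := fun a => ψ (a • x), map_zero' := by simp,
               map_add' := fun a b => by simp [add_smul] } (fun b a => by
      show ψ ((i b * a) • x) = b • ψ (a • x)
      rw [mul_smul, ← hc, map_smul])
  choose F hF using key
  have huniq : ∀ v w : V, (∀ a : A, lam (a • v) = lam (a • w)) → v = w := by
    intro v w h
    rw [← sub_eq_zero]
    apply hV0
    intro a
    rw [smul_sub, map_sub, h, sub_self]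
  refine ⟨{ toFun := F, map_add' := ?_, map_smul' := ?_ }, ?_⟩
  · intro x y
    apply huniq
    intro a
    rw [← hF, smul_add, smul_add, map_add, map_add, hF, hF]
  · intro b x
    apply huniq
    intro a
    rw [← hF, RingHom.id_apply, ← mul_smul, ← mul_smul, hF]
  · intro x
    have := hF x 1
    rw [one_smul, one_smul] at this
    exact this.symm

/-- Postcomposition with `lam`. -/
def lamComp {P : Type} [AddCommGroup P] [Module A P] [Module B P]
    (hc : ∀ (b : B) (x : P), b • x = i b • x) : (P →ₗ[A] V) →ₗ[k] (P →ₗ[B] k) where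
  toFun φ := { toFun := fun x => lam (φ x), map_add' := fun x y => by simp,
               map_smul' := fun b x => by rw [hc, map_smul, hlam, RingHom.id_apply] }
  map_add' φ ψ := by ext x; simp
  map_smul' c φ := by ext x; simp

include hV0 in
lemma lamComp_inj {P : Type} [AddCommGroup P] [Module A P]
    (φ : P →ₗ[A] V) (h : ∀ x, lam (φ x) = 0) : φ = 0 := by
  ext x
  apply hV0
  intro a
  rw [← map_smul]
  exact h _

include hc hDD hlam hV hV0 in
theorem shapiro_rank (hD : IsRes D) (hD' : IsRes D') (n : ℕ) :
    Module.rank k (Hc k D V n) = Module.rank k (Hc k D' k n) := by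
  apply rank_sub_quot k (lamComp k i lam hlam (hc (n + 1))) _ _ _ _ (Bc_le_Zc k hD' n)
  · intro φ hφ
    rw [mem_Zc] at hφ ⊢
    intro y
    show lam (φ _) = 0
    rw [hDD, hφ, map_zero]
  · intro ψ hψ
    rw [mem_Zc] at hψ
    obtain ⟨φ, hφ⟩ := shapiro_lift k i lam hV hV0 (hc (n + 1)) ψ
    refine ⟨φ, ?_, ?_⟩
    · rw [mem_Zc]
      intro y
      have := lamComp_inj k lam hV0 (φ ∘ₗ D (n + 1)) (fun x => by
        rw [LinearMap.comp_apply, hφ, ← hDD, hψ])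
      exact LinearMap.congr_fun this y
    · have : lamComp k i lam hlam (hc (n + 1)) φ - ψ = 0 := by
        ext x
        show lam (φ x) - ψ x = 0
        rw [hφ, sub_self]
      rw [this]; exact Submodule.zero_mem _
  · intro φ hφ
    cases n with
    | zero =>
      rw [mem_Bc_zero, mem_Bc_zero]
      constructor
      · intro h
        exact lamComp_inj k lam hV0 φ (fun x => LinearMap.congr_fun h x)
      · rintro rfl; simp
    | succ n =>
      rw [mem_Bc_succ, mem_Bc_succ]
      constructor
      · rintro ⟨ψ, hψ⟩
        obtain ⟨χ, hχ⟩ := shapiro_lift k i lam hV hV0 (hc (n + 1)) ψ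
        refine ⟨χ, fun y => ?_⟩
        have := lamComp_inj k lam hV0 (φ - χ ∘ₗ D (n + 1)) (fun x => by
          have h1 : lam (φ x) = ψ (D' (n + 1) x) := hψ x
          rw [LinearMap.sub_apply, LinearMap.comp_apply, map_sub, hχ, ← hDD, ← h1, sub_self])
        exact sub_eq_zero.1 (LinearMap.congr_fun this y)
      · rintro ⟨χ, hχ⟩
        refine ⟨lamComp k i lam hlam (hc (n + 1)) χ, fun y => ?_⟩
        show lam (φ y) = lam (χ _)
        rw [hχ, hDD]

include hri hc hDD hAk hlam hV hV0 in
theorem shapiro_surj (hD : IsRes D) (hD' : IsRes D')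
    (hC0 : ∀ (a : A) (x : C 0), i (r a) • x = a • x)
    (io : k →ₗ[A] V) (hio : ∀ c, lam (io c) = c)
    (n : ℕ) (φ : C (n + 1) →ₗ[A] V) (hφ : φ ∈ Zc k D V n) :
    ∃ φ' ∈ Zc k D k n, io ∘ₗ φ' - φ ∈ Bc k D V n := by
  haveI := hD.proj
  haveI := hD'.proj
  obtain ⟨θ, hθ0, hθ⟩ := exists_seq (α := fun n => C n →ₛₗ[i.comp r] C n)
    (fun n t => ∀ y, ∃ z, D n z = t (D n y))
    (fun n t t' => ∀ y, D n (t' y) = t (D n y))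
    { toFun := fun x => x, map_add' := fun _ _ => rfl, map_smul' := fun a x => (hC0 a x).symm }
    (fun y => hD.surj _)
    (fun n t ht => by
      obtain ⟨t', ht'⟩ := lift_range_semi (i.comp r) (D n) (t.comp (D n)) ht
      refine ⟨t', ht', fun y => ?_⟩
      refine (hD.exact n _).1 ?_
      rw [ht']
      show t (D n (D (n + 1) y)) = 0
      rw [hD.dd, map_zero])
  have hθB : ∀ n (b : B) x, θ n (b • x) = b • θ n x := by
    intro n b x
    rw [hc, hc, LinearMap.map_smulₛₗ, RingHom.comp_apply, hri]
  obtain ⟨h, hh0, hh⟩ := exists_seq (α := fun n => C n →ₗ[B] C (n + 1))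
    (fun n h => ∀ y, ∃ z, D' (n + 1) z = θ (n + 1) y - y - h (D' n y))
    (fun n h h' => ∀ y, D' (n + 1) (h' y) = θ (n + 1) y - y - h (D' n y))
    0
    (fun y => by
      refine (hD'.exact 0 _).1 ?_
      rw [LinearMap.zero_apply, sub_zero, map_sub, hDD, hDD, hθ, hθ0]
      exact sub_self _)
    (fun n h hn => by
      let g : C (n + 1) →ₗ[B] C (n + 1) :=
        { toFun := fun y => θ (n + 1) y - y - h (D' n y)
          map_add' := fun x y => by simp only [map_add]; abel
          map_smul' := fun b y => by
            simp only [map_smul, hθB, RingHom.id_apply, smul_sub] }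
      obtain ⟨h', hh'⟩ := lift_range (D' (n + 1)) g hn
      refine ⟨h', hh', fun y => ?_⟩
      refine (hD'.exact (n + 1) _).1 ?_
      have e := hh' (D' (n + 1) y)
      change _ = θ (n + 1) _ - _ - h _ at e
      rw [map_sub, map_sub, e, hDD, hθ, hD'.dd, map_zero, ← hDD, sub_zero, sub_self])
  rw [mem_Zc] at hφ
  let φ' : C (n + 1) →ₗ[A] k :=
    { toFun := fun x => lam (φ (θ (n + 1) x))
      map_add' := fun x y => by simp
      map_smul' := fun a x => by
        rw [LinearMap.map_smulₛₗ, map_smul, RingHom.comp_apply, hlam, RingHom.id_apply, hAk] }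
  have hcob : ∀ x, lam (io (φ' x) - φ x) = lam (φ (h n (D' n x))) := by
    intro x
    rw [map_sub, hio]
    show lam (φ (θ (n + 1) x)) - _ = _
    have : θ (n + 1) x = x + h n (D' n x) + D (n + 1) (h (n + 1) x) := by
      rw [← hDD, hh]; abel
    rw [this, map_add, map_add, hφ, map_add, map_add, map_zero, add_zero]
    abel
  refine ⟨φ', ?_, ?_⟩
  · rw [mem_Zc]
    intro y
    show lam (φ (θ _ _)) = 0
    rw [← hθ, hφ, map_zero]
  · cases n with
    | zero =>
      rw [mem_Bc_zero]
      apply lamComp_inj k lam hV0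
      intro x
      have := hcob x
      rw [hh0] at this
      simpa using this
    | succ n =>
      obtain ⟨χ, hχ⟩ := shapiro_lift k i lam hV hV0 (hc (n + 1))
        ((lamComp k i lam hlam (hc (n + 2)) φ).comp (h (n + 1)))
      rw [mem_Bc_succ]
      refine ⟨χ, fun y => ?_⟩
      have := lamComp_inj k lam hV0 ((io ∘ₗ φ' - φ) - χ ∘ₗ D (n + 1)) (fun x => by
        have h1 := hcob x
        simp only [LinearMap.sub_apply, LinearMap.comp_apply]
        rw [map_sub, h1, hχ, sub_eq_zero, hDD]
        rfl)
      exact sub_eq_zero.1 (LinearMap.congr_fun this y)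

end Shapiro
end NilCox

namespace NilCox

/-- The nilCoxeter relations, with generators outside `J` set to zero. -/
structure NilRel {R : Type} [Ring R] (J : Finset ℕ) (f : ℕ → R) : Prop where
  out : ∀ i, i ∉ J → f i = 0
  sq : ∀ i, f i * f i = 0
  braid : ∀ i, f i * f (i + 1) * f i = f (i + 1) * f i * f (i + 1)
  comm : ∀ i j, i + 2 ≤ j → f i * f j = f j * f i

section N
variable (k : Type) [Field k]

/-- Relations defining `N k J`. -/
inductive Rel (J : Finset ℕ) : FreeAlgebra k ℕ → FreeAlgebra k ℕ → Prop
  | out (i : ℕ) (h : i ∉ J) : Rel J (FreeAlgebra.ι k i) 0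
  | sq (i : ℕ) : Rel J (FreeAlgebra.ι k i * FreeAlgebra.ι k i) 0
  | braid (i : ℕ) : Rel J (FreeAlgebra.ι k i * FreeAlgebra.ι k (i + 1) * FreeAlgebra.ι k i)
      (FreeAlgebra.ι k (i + 1) * FreeAlgebra.ι k i * FreeAlgebra.ι k (i + 1))
  | comm (i j : ℕ) (h : i + 2 ≤ j) : Rel J (FreeAlgebra.ι k i * FreeAlgebra.ι k j)
      (FreeAlgebra.ι k j * FreeAlgebra.ι k i)

/-- Parabolic nilCoxeter algebra. -/
def N (J : Finset ℕ) : Type := RingQuot (Rel k J)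

noncomputable instance (J : Finset ℕ) : Ring (N k J) := inferInstanceAs (Ring (RingQuot (Rel k J)))
noncomputable instance (J : Finset ℕ) : Algebra k (N k J) :=
  inferInstanceAs (Algebra k (RingQuot (Rel k J)))

variable (J : Finset ℕ)

/-- The quotient map. -/
noncomputable def mkN : FreeAlgebra k ℕ →ₐ[k] N k J := RingQuot.mkAlgHom k (Rel k J)

lemma mkN_surj : Function.Surjective (mkN k J) := RingQuot.mkAlgHom_surjective k (Rel k J)

/-- Generators. -/
noncomputable def y (i : ℕ) : N k J := mkN k J (FreeAlgebra.ι k i)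

lemma mkN_rel {a b} (h : Rel k J a b) : mkN k J a = mkN k J b := RingQuot.mkAlgHom_rel k h

lemma y_rel : NilRel J (y k J) where
  out i h := by simpa [y] using mkN_rel k J (Rel.out i h)
  sq i := by simpa [y] using mkN_rel k J (Rel.sq i)
  braid i := by simpa [y] using mkN_rel k J (Rel.braid i)
  comm i j h := by simpa [y] using mkN_rel k J (Rel.comm i j h)

variable {k J}
/-- Universal property. -/
noncomputable def liftN {R : Type} [Ring R] [Algebra k R] (f : ℕ → R) (hf : NilRel J f) :
    N k J →ₐ[k] R :=
  RingQuot.liftAlgHom k ⟨FreeAlgebra.lift k f, by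
    rintro x y h
    induction h with
    | out i h => simp [hf.out i h]
    | sq i => simp [hf.sq i]
    | braid i => simp [hf.braid i]
    | comm i j h => simp [hf.comm i j h]⟩

@[simp] lemma liftN_y {R : Type} [Ring R] [Algebra k R] (f : ℕ → R) (hf : NilRel J f) (i : ℕ) :
    liftN (k := k) f hf (y k J i) = f i := by
  unfold liftN y mkN
  erw [RingQuot.liftAlgHom_mkAlgHom_apply]
  simp

lemma N_induction {p : N k J → Prop} (h1 : ∀ c : k, p (algebraMap k _ c)) (hy : ∀ i, p (y k J i))
    (hm : ∀ a b, p a → p b → p (a * b)) (ha : ∀ a b, p a → p b → p (a + b)) (a : N k J) : p a := by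
  obtain ⟨a, rfl⟩ := mkN_surj k J a
  induction a using FreeAlgebra.induction with
  | grade0 r => simpa using h1 r
  | grade1 i => exact hy i
  | mul a b iha ihb => simpa using hm _ _ iha ihb
  | add a b iha ihb => simpa using ha _ _ iha ihb

lemma N_hom_ext {R : Type} [Ring R] [Algebra k R] {f g : N k J →ₐ[k] R}
    (h : ∀ i, f (y k J i) = g (y k J i)) : f = g := by
  ext a
  induction a using N_induction with
  | h1 c => simp
  | hy i => exact h i
  | hm a b ha hb => simp [ha, hb]
  | ha a b ha hb => simp [ha, hb]

lemma N_span (S : Submodule k (N k J)) (h1 : 1 ∈ S) (hS : ∀ s ∈ S, ∀ i, s * y k J i ∈ S) :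
    S = ⊤ := by
  have : ∀ a : N k J, ∀ s ∈ S, s * a ∈ S := by
    intro a
    induction a using N_induction with
    | h1 c => intro s hs; rw [← Algebra.commutes, ← Algebra.smul_def]; exact S.smul_mem c hs
    | hy i => exact fun s hs => hS s hs i
    | hm a b ha hb => intro s hs; rw [← mul_assoc]; exact hb _ (ha _ hs)
    | ha a b ha hb => intro s hs; rw [mul_add]; exact S.add_mem (ha _ hs) (hb _ hs)
  rw [Submodule.eq_top_iff']
  intro a
  simpa using this a 1 h1

variable (k J)
/-- Augmentation. -/
noncomputable def aug : N k J →ₐ[k] k := liftN (fun _ => 0) ⟨by simp, by simp, by simp, by simp⟩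

@[simp] lemma aug_y (i : ℕ) : aug k J (y k J i) = 0 := liftN_y _ _ _

noncomputable instance instTriv : Module (N k J) k := Module.compHom k (aug k J).toRingHom

lemma triv_smul (a : N k J) (c : k) : a • c = aug k J a * c := rfl

instance : SMulCommClass (N k J) k k := ⟨fun a b c => by
  simp only [triv_smul, smul_eq_mul]; ring⟩

/-- Transfer map: `y i ↦ y i` if `i ∈ J`. -/
noncomputable def tr (J' : Finset ℕ) : N k J →ₐ[k] N k J' :=
  liftN (fun i => if i ∈ J then y k J' i else 0) (by
    have h := y_rel k J'
    constructor
    · intro i hi; simp [hi]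
    · intro i; split_ifs <;> simp [h.sq]
    · intro i; split_ifs <;> simp [h.braid]
    · intro i j hij; split_ifs <;> simp [h.comm i j hij])

variable {J}
lemma tr_y (J' : Finset ℕ) (i : ℕ) (h : i ∈ J ∨ i ∉ J') : tr k J J' (y k J i) = y k J' i := by
  unfold tr
  rw [liftN_y]
  split_ifs with h1
  · rfl
  · rw [(y_rel k J').out i (by tauto)]

lemma tr_tr {J' : Finset ℕ} (h : J' ⊆ J) (a : N k J') : tr k J J' (tr k J' J a) = a := by
  have : (tr k J J').comp (tr k J' J) = AlgHom.id k _ := by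
    apply N_hom_ext
    intro i
    by_cases hi : i ∈ J'
    · simp [tr_y, hi, h hi]
    · simp [(y_rel k J').out i hi]
  exact DFunLike.congr_fun this a

lemma aug_tr (J J' : Finset ℕ) (a : N k J) : aug k J' (tr k J J' a) = aug k J a := by
  have : (aug k J').comp (tr k J J') = aug k J := by
    apply N_hom_ext
    intro i
    unfold tr
    by_cases hi : i ∈ J <;> simp [hi]
  exact DFunLike.congr_fun this a

/-- `[l, m]` is the top component of `J`. -/
structure Cfg (J : Finset ℕ) (l m : ℕ) : Prop where
  le : l ≤ m
  sub : ∀ j, l ≤ j → j ≤ m → j ∈ J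
  out : ∀ j ∈ J, (l ≤ j ∧ j ≤ m) ∨ j + 2 ≤ l

lemma exists_cfg (J : Finset ℕ) (hJ : J.Nonempty) : ∃ l m, Cfg J l m := by
  classical
  have hex : ∃ l, ∀ j, l ≤ j → j ≤ J.max' hJ → j ∈ J := ⟨J.max' hJ, fun j h1 h2 => by
    rw [le_antisymm h2 h1]; exact J.max'_mem hJ⟩
  refine ⟨Nat.find hex, J.max' hJ, ?_, Nat.find_spec hex, ?_⟩
  · apply Nat.find_min'
    intro j h1 h2
    rw [le_antisymm h2 h1]; exact J.max'_mem hJ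
  · intro j hj
    have hjm := J.le_max' j hj
    by_contra hcon
    have h1 : j + 1 = Nat.find hex := by omega
    have := Nat.find_min hex (m := j) (by omega)
    apply this
    intro i hi1 hi2
    rcases Nat.eq_or_lt_of_le hi1 with rfl | h3
    · exact hj
    · exact Nat.find_spec hex i (by omega) hi2

variable (J)
/-- Coset representatives. -/
noncomputable def z (m : ℕ) : ℕ → N k J
  | 0 => 1
  | c + 1 => z m c * y k J (m - c)

lemma z_comm (m : ℕ) : ∀ c i, i + c < m → z k J m c * y k J i = y k J i * z k J m c
  | 0, i, _ => by simp [z]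
  | c + 1, i, h => by
    rw [z, mul_assoc, ← (y_rel k J).comm i (m - c) (by omega), ← mul_assoc,
      z_comm m c i (by omega), mul_assoc]

lemma z_braid (m : ℕ) : ∀ c i, i ≤ m → m + 2 ≤ i + c → c ≤ m + 1 →
    z k J m c * y k J i = y k J (i - 1) * z k J m c
  | 0, i, h0, h, _ => by omega
  | c + 1, i, h0, h, hc => by
    rcases Nat.eq_or_lt_of_le h with h1 | h1
    · obtain ⟨c, rfl⟩ : ∃ c', c = c' + 1 := ⟨c - 1, by omega⟩
      obtain ⟨i, rfl⟩ : ∃ i', i = i' + 1 := ⟨i - 1, by omega⟩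
      have e1 : m - c = i + 1 := by omega
      have e2 : m - (c + 1) = i := by omega
      rw [z, z, e1, e2]
      have hb := (y_rel k J).braid i
      have hc := z_comm k J m c i (by omega)
      simp only [Nat.add_sub_cancel]
      calc z k J m c * y k J (i + 1) * y k J i * y k J (i + 1)
          = z k J m c * (y k J (i + 1) * y k J i * y k J (i + 1)) := by noncomm_ring
        _ = (z k J m c * y k J i) * y k J (i + 1) * y k J i := by rw [← hb]; noncomm_ring
        _ = _ := by rw [hc]; noncomm_ring
    · rw [z, mul_assoc, (y_rel k J).comm (m - c) i (by omega), ← mul_assoc,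
        z_braid m c i h0 (by omega) (by omega), mul_assoc]

lemma z_step {l m : ℕ} (h : Cfg J l m) (c : ℕ) (hc : c < m + 2 - l) (i : ℕ) :
    ∃ b c', c' < m + 2 - l ∧ z k J m c * y k J i = tr k (J.erase m) J b * z k J m c' := by
  by_cases hi : i ∈ J
  swap
  · exact ⟨0, c, hc, by simp [(y_rel k J).out i hi]⟩
  have him : i ≤ m := by have := h.out i hi; have := h.le; omega
  have hlm := h.le
  rcases lt_trichotomy (i + c) m with h1 | h1 | h1
  · refine ⟨y k _ i, c, hc, ?_⟩
    rw [tr_y, z_comm k J m c i h1]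
    left; simp [hi]; omega
  · refine ⟨1, c + 1, ?_, ?_⟩
    · have := h.out i hi; omega
    · rw [z, map_one, one_mul]; congr 2; omega
  · rcases Nat.eq_or_lt_of_le h1 with h2 | h2
    · obtain ⟨c, rfl⟩ : ∃ c', c = c' + 1 := ⟨c - 1, by omega⟩
      refine ⟨0, 0, by omega, ?_⟩
      have e1 : m - c = i := by omega
      have e2 : z k J m (c + 1) = z k J m c * y k J (m - c) := rfl
      rw [e2, mul_assoc, e1, (y_rel k J).sq]; simp
    · refine ⟨y k _ (i - 1), c, hc, ?_⟩
      rw [tr_y, z_braid k J m c i him (by omega) (by omega)]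
      left
      rw [Finset.mem_erase]
      exact ⟨by omega, h.sub _ (by omega) (by omega)⟩

/-- The spanning map. -/
noncomputable def spanMap (m q : ℕ) : (Fin q → N k (J.erase m)) →ₗ[k] N k J where
  toFun f := ∑ c, tr k (J.erase m) J (f c) * z k J m c
  map_add' f g := by simp [add_mul, Finset.sum_add_distrib]
  map_smul' c f := by simp [Finset.smul_sum]

lemma spanMap_apply (m q : ℕ) (f : Fin q → N k (J.erase m)) :
    spanMap k J m q f = ∑ c, tr k (J.erase m) J (f c) * z k J m c := rfl

lemma spanMap_surj {l m : ℕ} (h : Cfg J l m) : Function.Surjective (spanMap k J m (m + 2 - l)) := by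
  rw [← LinearMap.range_eq_top]
  have hmem : ∀ b c, c < m + 2 - l →
      tr k (J.erase m) J b * z k J m c ∈ LinearMap.range (spanMap k J m (m + 2 - l)) := by
    intro b c hc
    refine ⟨Pi.single ⟨c, hc⟩ b, ?_⟩
    rw [spanMap_apply, Finset.sum_eq_single ⟨c, hc⟩]
    · simp
    · intro x _ hx
      rw [Pi.single_eq_of_ne hx]; simp
    · simp
  apply N_span
  · have := hmem 1 0 (by have := h.le; omega)
    simpa [z] using this
  · rintro _ ⟨f, rfl⟩ i
    rw [spanMap_apply, Finset.sum_mul]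
    apply Submodule.sum_mem
    intro c _
    obtain ⟨b, c', hc', e⟩ := z_step k J h c c.2 i
    rw [mul_assoc, e, ← mul_assoc, ← map_mul]
    exact hmem _ _ hc'

instance fin_empty : Module.Finite k (N k ∅) := by
  have : LinearMap.range (Algebra.linearMap k (N k ∅)) = ⊤ := by
    apply N_span
    · exact ⟨1, by simp⟩
    · intro s hs i
      rw [(y_rel k ∅).out i (by simp), mul_zero]
      exact Submodule.zero_mem _
  exact Module.Finite.of_surjective _ (LinearMap.range_eq_top.1 this)

theorem finN (J : Finset ℕ) : Module.Finite k (N k J) := by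
  induction hq : J.card generalizing J with
  | zero => rw [Finset.card_eq_zero] at hq; subst hq; infer_instance
  | succ q ih =>
    obtain ⟨l, m, h⟩ := exists_cfg J (Finset.card_pos.1 (by omega))
    have : Module.Finite k (N k (J.erase m)) := ih _ (by
      rw [Finset.card_erase_of_mem (h.sub m h.le le_rfl)]; omega)
    exact Module.Finite.of_surjective _ (spanMap_surj k J h)

instance : Module.Finite k (N k J) := finN k J

theorem finrank_le {l m : ℕ} (h : Cfg J l m) :
    Module.finrank k (N k J) ≤ (m + 2 - l) * Module.finrank k (N k (J.erase m)) := by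
  have := LinearMap.finrank_le_finrank_of_surjective (spanMap_surj k J h)
  simpa [Module.finrank_pi_fintype] using this

end N
end NilCox

namespace NilCox

/-- Move `i + 1` to `i`. -/
def mv (i : ℕ) (S : Finset ℕ) : Finset ℕ := insert i (S.erase (i + 1))

lemma mem_mv {i x : ℕ} {S : Finset ℕ} : x ∈ mv i S ↔ x = i ∨ (x ≠ i + 1 ∧ x ∈ S) := by
  simp [mv]

/-- Number of elements of `S` below `x`. -/
def cnt (S : Finset ℕ) : ℕ → ℕ
  | 0 => 0
  | x + 1 => cnt S x + if x ∈ S then 1 else 0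

lemma cnt_succ (S : Finset ℕ) (x : ℕ) : cnt S (x + 1) = cnt S x + if x ∈ S then 1 else 0 := rfl

lemma cnt_le_add (S : Finset ℕ) (x d : ℕ) : cnt S (x + d) ≤ cnt S x + d := by
  induction d with
  | zero => simp
  | succ d ih => rw [← add_assoc, cnt_succ]; split_ifs <;> omega

lemma cnt_mono (S : Finset ℕ) {x x' : ℕ} (h : x ≤ x') : cnt S x ≤ cnt S x' := by
  obtain ⟨d, rfl⟩ := Nat.exists_eq_add_of_le h
  induction d with
  | zero => simp
  | succ d ih => rw [← add_assoc, cnt_succ]; have := ih (by omega); omega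

lemma cnt_le (S : Finset ℕ) (x : ℕ) : cnt S x ≤ x := by
  have := cnt_le_add S 0 x
  simp only [zero_add, cnt] at this
  exact this

lemma cnt_eq (S : Finset ℕ) (x : ℕ) : cnt S x = (S.filter (· < x)).card := by
  induction x with
  | zero => simp [cnt]
  | succ x ih =>
    rw [cnt_succ, ih]
    have : S.filter (· < x + 1) = S.filter (· < x) ∪ S.filter (· = x) := by
      ext j; simp only [Finset.mem_filter, Finset.mem_union]; grind
    rw [this, Finset.card_union_of_disjoint]
    · congr 1
      rw [Finset.filter_eq' S x]
      split_ifs <;> simp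
    · rw [Finset.disjoint_left]; intro a; simp only [Finset.mem_filter]; omega

lemma cnt_mv {i : ℕ} {S : Finset ℕ} (h1 : i + 1 ∈ S) (h0 : i ∉ S) (x : ℕ) :
    cnt (mv i S) x = cnt S x + if x = i + 1 then 1 else 0 := by
  induction x with
  | zero => simp [cnt]
  | succ x ih =>
    rw [cnt_succ, cnt_succ, ih]
    rcases lt_trichotomy x i with h | h | h
    · simp [mem_mv, h.ne, (show x ≠ i + 1 by omega)]
    · subst h; simp [mem_mv, h0]
    · rcases Nat.eq_or_lt_of_le (show i + 1 ≤ x from h) with rfl | h'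
      · simp [mem_mv, h1]
      · simp [mem_mv, h.ne', (show x ≠ i + 1 by omega)]

/-- The family of `r`-subsets of `[l, M]`. -/
def fam (l M r : ℕ) : Finset (Finset ℕ) := (Finset.Icc l M).powersetCard r

lemma mem_fam {l M r : ℕ} {S : Finset ℕ} : S ∈ fam l M r ↔ (∀ x ∈ S, l ≤ x ∧ x ≤ M) ∧ S.card = r := by
  unfold fam
  rw [Finset.mem_powersetCard]
  simp [Finset.subset_iff]

lemma card_mv {i : ℕ} {S : Finset ℕ} (h1 : i + 1 ∈ S) (h0 : i ∉ S) : (mv i S).card = S.card := by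
  unfold mv
  rw [Finset.card_insert_of_notMem (by simp [h0]), Finset.card_erase_of_mem h1]
  have := Finset.card_pos.2 ⟨_, h1⟩
  omega

lemma mv_fam {J : Finset ℕ} {l m r : ℕ} (h : Cfg J l m) {i : ℕ} {S : Finset ℕ} (hi : i ∈ J)
    (h1 : i + 1 ∈ S) (h0 : i ∉ S) (hS : S ∈ fam l (m + 1) r) : mv i S ∈ fam l (m + 1) r := by
  rw [mem_fam] at hS ⊢
  refine ⟨fun x hx => ?_, by rw [card_mv h1 h0, hS.2]⟩
  rw [mem_mv] at hx
  rcases hx with rfl | hx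
  · have := hS.1 _ h1
    have := h.out _ hi
    omega
  · exact hS.1 _ hx.2

lemma fam_bound {l m p x : ℕ} {S : Finset ℕ} (hp : p ≤ m) (hS : S ∈ fam l (m + 1) (m + 1 - p))
    (hx : x ∉ S) (hxm : x ≤ m + 1) : x ≤ p + cnt S x := by
  rw [mem_fam] at hS
  have h1 : cnt S (m + 2) = m + 1 - p := by
    rw [cnt_eq, ← hS.2]
    congr 1
    rw [Finset.filter_eq_self]
    intro a ha
    have := hS.1 a ha
    omega
  obtain ⟨d, hd⟩ := Nat.exists_eq_add_of_le (show x + 1 ≤ m + 2 by omega)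
  have h2 := cnt_le_add S (x + 1) d
  rw [← hd, h1, cnt_succ, if_neg hx] at h2
  omega

section Bimod
variable (k : Type) [Field k] (J : Finset ℕ) (l m p : ℕ)

/-- The left `N (J \ p)`-module. -/
abbrev U : Type := Finset ℕ →₀ N k (J.erase p)

/-- Action of generators on basis elements. -/
noncomputable def vv (i : ℕ) (S : Finset ℕ) : U k J p :=
  if S ∈ fam l (m + 1) (m + 1 - p) ∧ i ∈ J then
    if i + 1 ∈ S then
      if i ∈ S then Finsupp.single S (y k _ (p + 1 + cnt S i)) else Finsupp.single (mv i S) 1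
    else if i ∈ S then 0 else Finsupp.single S (y k _ (i - cnt S i))
  else 0

/-- Right action operators. -/
noncomputable def Rop (i : ℕ) : Module.End (N k (J.erase p)) (U k J p) :=
  Finsupp.linearCombination _ (vv k J l m p i)

variable {J l m p}
lemma Rop_single (i : ℕ) (S : Finset ℕ) (b : N k (J.erase p)) :
    Rop k J l m p i (Finsupp.single S b) = b • vv k J l m p i S := by
  unfold Rop; rw [Finsupp.linearCombination_single]

lemma Rop_bad {i : ℕ} {S : Finset ℕ} (h : ¬ (S ∈ fam l (m + 1) (m + 1 - p) ∧ i ∈ J))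
    (b : N k (J.erase p)) : Rop k J l m p i (Finsupp.single S b) = 0 := by
  rw [Rop_single, vv, if_neg h, smul_zero]

variable {i : ℕ} {S : Finset ℕ} (hS : S ∈ fam l (m + 1) (m + 1 - p)) (hi : i ∈ J)
  (b : N k (J.erase p))
include hS hi

lemma Rop_in (h0 : i ∈ S) (h1 : i + 1 ∈ S) : Rop k J l m p i (Finsupp.single S b) =
    Finsupp.single S (b * y k _ (p + 1 + cnt S i)) := by
  rw [Rop_single, vv, if_pos ⟨hS, hi⟩, if_pos h1, if_pos h0, Finsupp.smul_single, smul_eq_mul]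

lemma Rop_out (h0 : i ∉ S) (h1 : i + 1 ∉ S) : Rop k J l m p i (Finsupp.single S b) =
    Finsupp.single S (b * y k _ (i - cnt S i)) := by
  rw [Rop_single, vv, if_pos ⟨hS, hi⟩, if_neg h1, if_neg h0, Finsupp.smul_single, smul_eq_mul]

lemma Rop_mv (h0 : i ∉ S) (h1 : i + 1 ∈ S) : Rop k J l m p i (Finsupp.single S b) =
    Finsupp.single (mv i S) b := by
  rw [Rop_single, vv, if_pos ⟨hS, hi⟩, if_pos h1, if_neg h0, Finsupp.smul_single, smul_eq_mul,
    mul_one]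

lemma Rop_zero (h0 : i ∈ S) (h1 : i + 1 ∉ S) : Rop k J l m p i (Finsupp.single S b) = 0 := by
  rw [Rop_single, vv, if_pos ⟨hS, hi⟩, if_neg h1, if_pos h0, smul_zero]

omit hS hi

lemma Rop_sq (h : Cfg J l m) (i : ℕ) : Rop k J l m p i * Rop k J l m p i = 0 := by
  apply Finsupp.lhom_ext
  intro S b
  rw [Module.End.mul_apply, LinearMap.zero_apply]
  by_cases hb : S ∈ fam l (m + 1) (m + 1 - p) ∧ i ∈ J
  swap
  · rw [Rop_bad k hb, map_zero]
  obtain ⟨hS, hi⟩ := hb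
  by_cases h0 : i ∈ S <;> by_cases h1 : i + 1 ∈ S
  · rw [Rop_in k hS hi _ h0 h1, Rop_in k hS hi _ h0 h1, mul_assoc, (y_rel k _).sq]; simp
  · rw [Rop_zero k hS hi _ h0 h1, map_zero]
  · rw [Rop_mv k hS hi _ h0 h1, Rop_zero k (mv_fam h hi h1 h0 hS) hi] <;> simp [mem_mv]
  · rw [Rop_out k hS hi _ h0 h1, Rop_out k hS hi _ h0 h1, mul_assoc, (y_rel k _).sq]; simp

lemma Rop_out0 (hi : i ∉ J) : Rop k J l m p i = 0 := by
  apply Finsupp.lhom_ext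
  intro S b
  rw [Rop_bad k (by tauto), LinearMap.zero_apply]

lemma Rop_braid (h : Cfg J l m) (i : ℕ) :
    Rop k J l m p i * Rop k J l m p (i + 1) * Rop k J l m p i =
    Rop k J l m p (i + 1) * Rop k J l m p i * Rop k J l m p (i + 1) := by
  by_cases hi : i ∈ J
  swap
  · simp [Rop_out0 k hi]
  by_cases hi1 : i + 1 ∈ J
  swap
  · simp [Rop_out0 k hi1]
  apply Finsupp.lhom_ext
  intro S b
  simp only [Module.End.mul_apply]
  by_cases hS : S ∈ fam l (m + 1) (m + 1 - p)
  swap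
  · rw [Rop_bad k (by tauto), Rop_bad k (by tauto)]; simp
  have hcle := cnt_le S i
  have hm0 : ∀ {S}, S ∈ fam l (m + 1) (m + 1 - p) → i ∉ S → i + 1 ∈ S →
    mv i S ∈ fam l (m + 1) (m + 1 - p) := fun hS h0 h1 => mv_fam h hi h1 h0 hS
  have hm1 : ∀ {S}, S ∈ fam l (m + 1) (m + 1 - p) → i + 1 ∉ S → i + 1 + 1 ∈ S →
    mv (i + 1) S ∈ fam l (m + 1) (m + 1 - p) := fun hS h0 h1 => mv_fam h hi1 h1 h0 hS
  by_cases h0 : i ∈ S <;> by_cases h1 : i + 1 ∈ S <;> by_cases h2 : i + 1 + 1 ∈ S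
  · rw [Rop_in k hS hi _ h0 h1, Rop_in k hS hi1 _ h1 h2, Rop_in k hS hi _ h0 h1,
      Rop_in k hS hi1 _ h1 h2, Rop_in k hS hi _ h0 h1, Rop_in k hS hi1 _ h1 h2]
    have e : cnt S (i + 1) = cnt S i + 1 := by simp [cnt_succ, h0]
    rw [e]
    have := (y_rel k (J.erase p)).braid (p + 1 + cnt S i)
    simp only [mul_assoc] at this ⊢
    rw [← add_assoc, this]
  · rw [Rop_in k hS hi _ h0 h1, Rop_zero k hS hi1 _ h1 h2, Rop_zero k hS hi1 _ h1 h2]; simp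
  · rw [Rop_zero k hS hi _ h0 h1, Rop_mv k hS hi1 _ h1 h2,
      Rop_in k (hm1 hS h1 h2) hi _ (by simp [mem_mv, h0] <;> omega) (by simp [mem_mv] <;> omega),
      Rop_zero k (hm1 hS h1 h2) hi1 _ (by simp [mem_mv] <;> omega) (by simp [mem_mv] <;> omega)]
    simp
  · rw [Rop_zero k hS hi _ h0 h1, Rop_out k hS hi1 _ h1 h2, Rop_zero k hS hi _ h0 h1]
    simp
  · have a1 : i + 1 ∉ mv i S := by simp [mem_mv] <;> omega
    have a2 : i + 1 + 1 ∈ mv i S := by simp [mem_mv, h2] <;> omega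
    rw [Rop_mv k hS hi _ h0 h1, Rop_mv k (hm0 hS h0 h1) hi1 _ a1 a2,
      Rop_in k (hm1 (hm0 hS h0 h1) a1 a2) hi _ (by simp [mem_mv] <;> omega) (by simp [mem_mv] <;> omega),
      Rop_in k hS hi1 _ h1 h2, Rop_mv k hS hi _ h0 h1, Rop_mv k (hm0 hS h0 h1) hi1 _ a1 a2]
    rw [cnt_mv a2 a1, cnt_mv h1 h0, cnt_succ, if_neg h0, if_neg (by omega), if_neg (by omega)]
  · have a1 : i + 1 ∉ mv i S := by simp [mem_mv] <;> omega
    have a2 : i + 1 + 1 ∉ mv i S := by simp [mem_mv, h2] <;> omega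
    rw [Rop_mv k hS hi _ h0 h1, Rop_out k (hm0 hS h0 h1) hi1 _ a1 a2,
      Rop_zero k (hm0 hS h0 h1) hi _ (by simp [mem_mv] <;> omega) a1, Rop_zero k hS hi1 _ h1 h2]
    simp
  · have a1 : i ∉ mv (i + 1) S := by simp [mem_mv, h0] <;> omega
    have a2 : i + 1 ∈ mv (i + 1) S := by simp [mem_mv] <;> omega
    rw [Rop_out k hS hi _ h0 h1, Rop_mv k hS hi1 _ h1 h2, Rop_mv k (hm1 hS h1 h2) hi _ a1 a2,
      Rop_mv k hS hi1 _ h1 h2, Rop_mv k (hm1 hS h1 h2) hi _ a1 a2,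
      Rop_out k (hm0 (hm1 hS h1 h2) a1 a2) hi1 _ (by simp [mem_mv] <;> omega) (by simp [mem_mv] <;> omega)]
    rw [cnt_mv a2 a1, cnt_mv h2 h1, cnt_succ, if_neg h0]
    simp
  · rw [Rop_out k hS hi _ h0 h1, Rop_out k hS hi1 _ h1 h2, Rop_out k hS hi _ h0 h1,
      Rop_out k hS hi1 _ h1 h2, Rop_out k hS hi _ h0 h1, Rop_out k hS hi1 _ h1 h2]
    have e : i + 1 - cnt S (i + 1) = (i - cnt S i) + 1 := by rw [cnt_succ, if_neg h0]; omega
    rw [e]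
    have := (y_rel k (J.erase p)).braid (i - cnt S i)
    simp only [mul_assoc] at this ⊢
    rw [this]

lemma mv_comm {i j : ℕ} (hij : i + 2 ≤ j) (S : Finset ℕ) : mv i (mv j S) = mv j (mv i S) := by
  ext x; simp only [mem_mv]; grind

lemma Rop_comm (h : Cfg J l m) (hp : p ≤ m) (i j : ℕ) (hij : i + 2 ≤ j) :
    Rop k J l m p i * Rop k J l m p j = Rop k J l m p j * Rop k J l m p i := by
  by_cases hi : i ∈ J
  swap
  · simp [Rop_out0 k hi]
  by_cases hj : j ∈ J
  swap
  · simp [Rop_out0 k hj]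
  apply Finsupp.lhom_ext
  intro S b
  simp only [Module.End.mul_apply]
  by_cases hS : S ∈ fam l (m + 1) (m + 1 - p)
  swap
  · rw [Rop_bad k (by tauto), Rop_bad k (by tauto)]; simp
  have him : i ≤ m := by have := h.out i hi; have := h.le; omega
  have hjm : j ≤ m := by have := h.out j hj; have := h.le; omega
  have hmi : ∀ {x}, i + 2 ≤ x → (x ∈ mv i S ↔ x ∈ S) := by
    intro x hx; rw [mem_mv]; grind
  have hmj : ∀ {x}, x < j → (x ∈ mv j S ↔ x ∈ S) := by
    intro x hx; rw [mem_mv]; grind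
  have hb : ∀ x, x ≤ m → x ∉ S → x + 1 ∉ S → x + 1 ≤ p + cnt S x := by
    intro x hx h0 h1
    have := fam_bound hp hS h1 (by omega)
    rwa [cnt_succ, if_neg h0] at this
  have hc1 := cnt_mono S hij
  rw [cnt_succ, cnt_succ] at hc1
  obtain ⟨d, hd⟩ := Nat.exists_eq_add_of_le hij
  have hc2 := cnt_le_add S (i + 2) d
  rw [← hd, cnt_succ, cnt_succ] at hc2
  have hcl := cnt_le S i
  have hcl' := cnt_le S j
  have hcomm := (y_rel k (J.erase p)).comm
  by_cases h0 : i ∈ S <;> by_cases h1 : i + 1 ∈ S <;>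
    by_cases h2 : j ∈ S <;> by_cases h3 : j + 1 ∈ S
  · simp only [h0, h1, if_true] at hc1 hc2
    rw [Rop_in k hS hi _ h0 h1, Rop_in k hS hj _ h2 h3, Rop_in k hS hi _ h0 h1,
      Rop_in k hS hj _ h2 h3, mul_assoc, mul_assoc, hcomm (p + 1 + cnt S i) (p + 1 + cnt S j) (by omega)]
  · rw [Rop_zero k hS hj _ h2 h3, Rop_in k hS hi _ h0 h1, Rop_zero k hS hj _ h2 h3, map_zero]
  · have f := mv_fam h hj h3 h2 hS
    rw [Rop_mv k hS hj _ h2 h3, Rop_in k hS hi _ h0 h1, Rop_mv k hS hj _ h2 h3,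
      Rop_in k f hi _ ((hmj (by omega)).2 h0) ((hmj (by omega)).2 h1), cnt_mv h3 h2,
      if_neg (by omega)]
    simp
  · have := hb j hjm h2 h3
    rw [Rop_in k hS hi _ h0 h1, Rop_out k hS hj _ h2 h3, Rop_in k hS hi _ h0 h1,
      Rop_out k hS hj _ h2 h3, mul_assoc, mul_assoc, hcomm (j - cnt S j) (p + 1 + cnt S i) (by omega)]
  · rw [Rop_in k hS hj _ h2 h3, Rop_zero k hS hi _ h0 h1, Rop_zero k hS hi _ h0 h1, map_zero]
  · rw [Rop_zero k hS hj _ h2 h3, Rop_zero k hS hi _ h0 h1, map_zero, map_zero]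
  · have f := mv_fam h hj h3 h2 hS
    rw [Rop_mv k hS hj _ h2 h3, Rop_zero k hS hi _ h0 h1,
      Rop_zero k f hi _ ((hmj (by omega)).2 h0) (fun hh => h1 ((hmj (by omega)).1 hh)), map_zero]
  · rw [Rop_out k hS hj _ h2 h3, Rop_zero k hS hi _ h0 h1, Rop_zero k hS hi _ h0 h1, map_zero]
  · have f := mv_fam h hi h1 h0 hS
    rw [Rop_in k hS hj _ h2 h3, Rop_mv k hS hi _ h0 h1, Rop_mv k hS hi _ h0 h1,
      Rop_in k f hj _ ((hmi (by omega)).2 h2) ((hmi (by omega)).2 h3), cnt_mv h1 h0,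
      if_neg (by omega)]
    simp
  · have f := mv_fam h hi h1 h0 hS
    rw [Rop_zero k hS hj _ h2 h3, Rop_mv k hS hi _ h0 h1,
      Rop_zero k f hj _ ((hmi (by omega)).2 h2) (fun hh => h3 ((hmi (by omega)).1 hh)), map_zero]
  · have f := mv_fam h hi h1 h0 hS
    have f' := mv_fam h hj h3 h2 hS
    rw [Rop_mv k hS hj _ h2 h3, Rop_mv k hS hi _ h0 h1,
      Rop_mv k f hj _ (fun hh => h2 ((hmi (by omega)).1 hh)) ((hmi (by omega)).2 h3),
      Rop_mv k f' hi _ (fun hh => h0 ((hmj (by omega)).1 hh)) ((hmj (by omega)).2 h1),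
      mv_comm hij]
  · have f := mv_fam h hi h1 h0 hS
    rw [Rop_out k hS hj _ h2 h3, Rop_mv k hS hi _ h0 h1, Rop_mv k hS hi _ h0 h1,
      Rop_out k f hj _ (fun hh => h2 ((hmi (by omega)).1 hh))
        (fun hh => h3 ((hmi (by omega)).1 hh)), cnt_mv h1 h0, if_neg (by omega)]
    simp
  · have := hb i him h0 h1
    rw [Rop_in k hS hj _ h2 h3, Rop_out k hS hi _ h0 h1, Rop_out k hS hi _ h0 h1,
      Rop_in k hS hj _ h2 h3, mul_assoc, mul_assoc, hcomm (i - cnt S i) (p + 1 + cnt S j) (by omega)]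
  · rw [Rop_zero k hS hj _ h2 h3, Rop_out k hS hi _ h0 h1, Rop_zero k hS hj _ h2 h3, map_zero]
  · have f := mv_fam h hj h3 h2 hS
    rw [Rop_mv k hS hj _ h2 h3, Rop_out k hS hi _ h0 h1, Rop_mv k hS hj _ h2 h3,
      Rop_out k f hi _ (fun hh => h0 ((hmj (by omega)).1 hh))
        (fun hh => h1 ((hmj (by omega)).1 hh)), cnt_mv h3 h2, if_neg (by omega)]
    simp
  · simp only [h0, h1, if_false] at hc1 hc2
    rw [Rop_out k hS hi _ h0 h1, Rop_out k hS hj _ h2 h3, Rop_out k hS hi _ h0 h1,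
      Rop_out k hS hj _ h2 h3, mul_assoc, mul_assoc, hcomm (i - cnt S i) (j - cnt S j) (by omega)]

lemma Rop_rel (h : Cfg J l m) (hp : p ≤ m) :
    NilRel J (fun i => MulOpposite.op (Rop k J l m p i)) where
  out i hi := by rw [Rop_out0 k hi]; rfl
  sq i := by rw [← MulOpposite.op_mul, Rop_sq k h]; rfl
  braid i := by
    simp only [← MulOpposite.op_mul]
    rw [← mul_assoc, ← mul_assoc, Rop_braid k h]
  comm i j hij := by simp only [← MulOpposite.op_mul]; rw [Rop_comm k h hp i j hij]

end Bimod
end NilCox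

namespace NilCox

section Phi
variable (k : Type) [Field k] {J : Finset ℕ} {l m p : ℕ} (h : Cfg J l m) (hl : l ≤ p) (hp : p ≤ m)

/-- The right action as an algebra map to the opposite endomorphism algebra. -/
noncomputable def rho : N k J →ₐ[k] (Module.End (N k (J.erase p)) (U k J p))ᵐᵒᵖ :=
  liftN _ (Rop_rel k h hp)

/-- Right action. -/
noncomputable def ract (a : N k J) : Module.End (N k (J.erase p)) (U k J p) :=
  MulOpposite.unop (rho k h hp a)

lemma ract_y (i : ℕ) : ract k h hp (y k J i) = Rop k J l m p i := by
  unfold ract rho; rw [liftN_y]; rfl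

lemma ract_mul (a b : N k J) : ract k h hp (a * b) = ract k h hp b * ract k h hp a := by
  unfold ract; rw [map_mul]; rfl

lemma ract_add (a b : N k J) : ract k h hp (a + b) = ract k h hp a + ract k h hp b := by
  unfold ract; rw [map_add]; rfl

lemma ract_smul (c : k) (a : N k J) : ract k h hp (c • a) = c • ract k h hp a := by
  unfold ract; rw [map_smul]; rfl

lemma ract_alg (c : k) (u : U k J p) : ract k h hp (algebraMap k _ c) u = c • u := by
  unfold ract; rw [AlgHom.commutes]; rfl

/-- Base point. -/
def S0 (m p : ℕ) : Finset ℕ := Finset.Icc (p + 1) (m + 1)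

include hl hp in
lemma S0_mem : S0 m p ∈ fam l (m + 1) (m + 1 - p) := by
  rw [mem_fam, S0]
  refine ⟨fun x hx => ?_, ?_⟩
  · rw [Finset.mem_Icc] at hx; omega
  · rw [Nat.card_Icc]; omega

lemma cnt_S0 (x : ℕ) (hx : x ≤ m + 2) : cnt (S0 m p) x = x - (p + 1) := by
  induction x with
  | zero => simp [cnt]
  | succ x ih =>
    rw [cnt_succ, ih (by omega)]
    simp only [S0, Finset.mem_Icc]
    split_ifs <;> omega

include hl in
lemma ract_S0 (b c : N k (J.erase p)) :
    ract k h hp (tr k (J.erase p) J b) (Finsupp.single (S0 m p) c) =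
      Finsupp.single (S0 m p) (c * b) := by
  induction b using N_induction generalizing c with
  | h1 x => rw [AlgHom.commutes, ract_alg, Finsupp.smul_single, ← Algebra.commutes, Algebra.smul_def]
  | hy i =>
    by_cases hi : i ∈ J.erase p
    swap
    · rw [(y_rel k _).out i hi]; simp [ract]
    have hij := (Finset.mem_erase.1 hi)
    have him : i ≤ m := by have := h.out i hij.2; have := h.le; omega
    rw [tr_y k J i (Or.inl hi), ract_y]
    rcases Nat.lt_or_gt_of_ne hij.1 with h1 | h1
    · rw [Rop_out k (S0_mem hl hp) hij.2, cnt_S0 _ (by omega)]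
      · congr 3; omega
      · simp [S0]; omega
      · simp [S0]; omega
    · rw [Rop_in k (S0_mem hl hp) hij.2, cnt_S0 _ (by omega)]
      · congr 3; omega
      · simp [S0]; omega
      · simp [S0]; omega
  | hm a b ha hb => rw [map_mul, ract_mul, Module.End.mul_apply, ha, hb, mul_assoc]
  | ha a b ha hb => rw [map_add, ract_add, LinearMap.add_apply, ha, hb, ← Finsupp.single_add, mul_add]

/-- The comparison map. -/
noncomputable def Phi (a : N k J) : U k J p := ract k h hp a (Finsupp.single (S0 m p) 1)

lemma Phi_mul_y (a : N k J) (i : ℕ) : Phi k h hp (a * y k J i) = Rop k J l m p i (Phi k h hp a) := by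
  unfold Phi; rw [ract_mul, ract_y]; rfl

lemma Phi_add (a b : N k J) : Phi k h hp (a + b) = Phi k h hp a + Phi k h hp b := by
  unfold Phi; rw [ract_add]; rfl

lemma Phi_smul (c : k) (b : N k J) : Phi k h hp (c • b) = c • Phi k h hp b := by
  unfold Phi; rw [ract_smul]; rfl

include hl in
lemma Phi_tr_mul (b : N k (J.erase p)) (a : N k J) :
    Phi k h hp (tr k (J.erase p) J b * a) = b • Phi k h hp a := by
  unfold Phi
  rw [ract_mul, Module.End.mul_apply, ract_S0 k h hl hp, one_mul, ← map_smul,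
    Finsupp.smul_single, smul_eq_mul, mul_one]

lemma Phi_one : Phi k h hp 1 = Finsupp.single (S0 m p) 1 := by
  unfold Phi ract; rw [map_one]; rfl


/-- Supported part. -/
noncomputable abbrev Us (k : Type) [Field k] (J : Finset ℕ) (l m p : ℕ) :
    Submodule (N k (J.erase p)) (U k J p) :=
  Finsupp.supported (N k (J.erase p)) (N k (J.erase p))
      (fam l (m + 1) (m + 1 - p) : Set (Finset ℕ))

include h in
lemma Rop_supported (i : ℕ) (u : U k J p) : Rop k J l m p i u ∈ Us k J l m p := by
  induction u using Finsupp.induction_linear with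
  | zero => simp
  | add f g hf hg => rw [map_add]; exact Submodule.add_mem _ hf hg
  | single S b =>
    rw [Rop_single]
    apply Submodule.smul_mem
    unfold vv
    split_ifs with h1 h2 h3 h3
    · exact Finsupp.single_mem_supported _ _ h1.1
    · exact Finsupp.single_mem_supported _ _ (mv_fam h h1.2 h2 h3 h1.1)
    · exact Submodule.zero_mem _
    · exact Finsupp.single_mem_supported _ _ h1.1
    · exact Submodule.zero_mem _

include hl in
lemma Phi_mem (a : N k J) : Phi k h hp a ∈ Us k J l m p := by
  let T : Submodule k (N k J) :=
    { carrier := {a | Phi k h hp a ∈ Us k J l m p}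
      zero_mem' := by
        have : Phi k h hp 0 = 0 := by have := Phi_smul k h hp 0 0; simpa using this
        show Phi k h hp 0 ∈ Us k J l m p
        rw [this]; exact Submodule.zero_mem _
      add_mem' := fun {a b} ha hb => by
        show Phi k h hp (a + b) ∈ Us k J l m p
        rw [Phi_add]; exact Submodule.add_mem _ ha hb
      smul_mem' := fun c a ha => by
        show Phi k h hp (c • a) ∈ Us k J l m p
        rw [Phi_smul]
        rw [← algebraMap_smul (N k (J.erase p)) c]
        exact Submodule.smul_mem _ _ ha }
  have hT : T = ⊤ := by
    apply N_span
    · show Phi k h hp 1 ∈ Us k J l m p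
      rw [Phi_one]; exact Finsupp.single_mem_supported _ _ (S0_mem hl hp)
    · intro s _ i
      show Phi k h hp _ ∈ Us k J l m p
      rw [Phi_mul_y]
      exact Rop_supported k h i _
  have : a ∈ T := by rw [hT]; trivial
  exact this

lemma exists_gap {S : Finset ℕ} (hp : p ≤ m) (hS : S ∈ fam l (m + 1) (m + 1 - p)) (hne : S ≠ S0 m p) :
    ∃ i ∈ S, i ≤ m ∧ i + 1 ∉ S := by
  by_contra hcon
  push Not at hcon
  rw [mem_fam] at hS
  have hSn : S.Nonempty := Finset.card_pos.1 (by omega)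
  have hx := S.min'_mem hSn
  have hmin : ∀ y ∈ S, S.min' hSn ≤ y := fun y hy => S.min'_le y hy
  generalize S.min' hSn = x at hx hmin
  have hall : ∀ d, x + d ≤ m + 1 → x + d ∈ S := by
    intro d
    induction d with
    | zero => intro _; exact hx
    | succ d ih =>
      intro hd
      have h3 := ih (by omega)
      have h4 : x + d ≤ m := by omega
      exact hcon _ h3 h4
  have hSe : S = Finset.Icc x (m + 1) := by
    ext y
    rw [Finset.mem_Icc]
    constructor
    · intro hy; exact ⟨hmin y hy, (hS.1 y hy).2⟩
    · rintro ⟨h1, h2⟩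
      have := hall (y - x) (by omega)
      rwa [show x + (y - x) = y by omega] at this
  have hc := hS.2
  have hxm := (hS.1 x hx).2
  rw [hSe, Nat.card_Icc] at hc
  apply hne
  rw [hSe, S0]
  congr 1
  omega

include hl in
lemma Phi_hit : ∀ (q : ℕ) (S : Finset ℕ), S ∈ fam l (m + 1) (m + 1 - p) →
    (∑ x ∈ S, (m + 1 - x)) = q → ∃ a, Phi k h hp a = Finsupp.single S 1 := by
  intro q
  induction q using Nat.strong_induction_on with
  | _ q ih =>
    intro S hS hq
    by_cases hne : S = S0 m p
    · exact ⟨1, by rw [Phi_one, hne]⟩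
    obtain ⟨i, hi, him, hi1⟩ := exists_gap hp hS hne
    have hS' := (mem_fam.1 hS)
    have hli := (hS'.1 i hi).1
    let S' := insert (i + 1) (S.erase i)
    have hnm : i + 1 ∉ S.erase i := by simp [hi1]
    have hmem : S' ∈ fam l (m + 1) (m + 1 - p) := by
      rw [mem_fam]
      refine ⟨fun x hx => ?_, ?_⟩
      · rcases Finset.mem_insert.1 hx with rfl | hx
        · omega
        · exact hS'.1 x (Finset.mem_of_mem_erase hx)
      · rw [Finset.card_insert_of_notMem hnm, Finset.card_erase_of_mem hi, ← hS'.2]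
        have := Finset.card_pos.2 ⟨_, hi⟩
        omega
    have hsum : ∑ x ∈ S', (m + 1 - x) < q := by
      rw [Finset.sum_insert hnm, ← hq, ← Finset.add_sum_erase S _ hi]
      omega
    obtain ⟨a, ha⟩ := ih _ hsum S' hmem rfl
    refine ⟨a * y k J i, ?_⟩
    rw [Phi_mul_y, ha, Rop_mv k hmem (h.sub i hli him)]
    · congr 1
      ext x
      simp only [mem_mv, S', Finset.mem_insert, Finset.mem_erase]
      grind
    · simp [S']
    · simp [S']

/-- `Phi` as a `k`-linear map to the supported part. -/
noncomputable def PhiL : N k J →ₗ[k] Us k J l m p where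
  toFun a := ⟨Phi k h hp a, Phi_mem k h hl hp a⟩
  map_add' a b := Subtype.ext (Phi_add k h hp a b)
  map_smul' c a := Subtype.ext (Phi_smul k h hp c a)

lemma PhiL_surj : Function.Surjective (PhiL k h hl hp) := by
  choose F hF using fun S hS => Phi_hit k h hl hp _ S hS rfl
  rintro ⟨u, hu⟩
  classical
  refine ⟨∑ S ∈ (fam l (m + 1) (m + 1 - p)).attach, tr k (J.erase p) J (u S) * F S S.2, ?_⟩
  rw [map_sum]
  apply Subtype.ext
  rw [AddSubmonoidClass.coe_finset_sum]
  have : ∀ S : {x // x ∈ fam l (m + 1) (m + 1 - p)},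
      ((PhiL k h hl hp (tr k (J.erase p) J (u S) * F S S.2) : Us k J l m p) : U k J p) =
        Finsupp.single S.1 (u S.1) := by
    intro S
    show Phi k h hp _ = _
    rw [Phi_tr_mul k h hl, hF, Finsupp.smul_single, smul_eq_mul, mul_one]
  rw [Finset.sum_congr rfl (fun S _ => this S),
    Finset.sum_attach _ (fun S => Finsupp.single S (u S))]
  show _ = u
  conv_rhs => rw [← Finsupp.sum_single u]
  rw [Finsupp.sum]
  symm
  apply Finset.sum_subset
  · exact hu
  · intro x _ hx
    rw [Finsupp.notMem_support_iff.1 hx, Finsupp.single_zero]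

lemma finrank_Us : Module.finrank k (Us k J l m p) =
    (fam l (m + 1) (m + 1 - p)).card * Module.finrank k (N k (J.erase p)) := by
  have e := (Finsupp.supportedEquivFinsupp (M := N k (J.erase p)) (R := N k (J.erase p))
    (fam l (m + 1) (m + 1 - p) : Set (Finset ℕ))).restrictScalars k
  rw [e.finrank_eq, Module.finrank_finsupp]
  simp

lemma card_fam (l M r : ℕ) : (fam l M r).card = (M + 1 - l).choose r := by
  rw [fam, Finset.card_powersetCard, Nat.card_Icc]

include h hl hp in
lemma finrank_ge : (m + 2 - l).choose (m + 1 - p) * Module.finrank k (N k (J.erase p)) ≤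
    Module.finrank k (N k J) := by
  have := LinearMap.finrank_le_finrank_of_surjective (PhiL_surj k h hl hp)
  rwa [finrank_Us, card_fam] at this

include h in
lemma finrank_eq_top : Module.finrank k (N k J) =
    (m + 2 - l) * Module.finrank k (N k (J.erase m)) := by
  apply le_antisymm (finrank_le k J h)
  have := finrank_ge k h h.le le_rfl
  rwa [show m + 1 - m = 1 by omega, Nat.choose_one_right] at this

lemma finrank_fact (J0 : Finset ℕ) (l : ℕ) (hJ0 : ∀ j ∈ J0, j + 2 ≤ l) (q : ℕ) :
    Module.finrank k (N k (J0 ∪ Finset.Ico l (l + q))) =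
      (q + 1).factorial * Module.finrank k (N k J0) := by
  induction q with
  | zero =>
    have : J0 ∪ Finset.Ico l (l + 0) = J0 := by simp
    rw [this]; simp
  | succ q ih =>
    have hc : Cfg (J0 ∪ Finset.Ico l (l + (q + 1))) l (l + q) := by
      refine ⟨by omega, fun j h1 h2 => ?_, fun j hj => ?_⟩
      · simp; right; omega
      · simp only [Finset.mem_union, Finset.mem_Ico] at hj
        rcases hj with hj | hj
        · right; exact hJ0 j hj
        · left; omega
    have he : (J0 ∪ Finset.Ico l (l + (q + 1))).erase (l + q) = J0 ∪ Finset.Ico l (l + q) := by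
      ext j
      simp only [Finset.mem_erase, Finset.mem_union, Finset.mem_Ico]
      have := hJ0 j
      constructor
      · rintro ⟨h1, h2 | h2⟩
        · exact Or.inl h2
        · right; omega
      · rintro (h2 | h2)
        · exact ⟨by have := this h2; omega, Or.inl h2⟩
        · exact ⟨by omega, by right; omega⟩
    rw [finrank_eq_top k hc, he, ih, show l + q + 2 - l = q + 2 by omega,
      Nat.factorial_succ (q + 1)]
    ring

include h hl hp in
lemma finrank_eq : Module.finrank k (N k J) = 
    (m + 2 - l).choose (m + 1 - p) * Module.finrank k (N k (J.erase p)) := by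
  let J0 := J.filter (· < l)
  have hJ0 : ∀ j ∈ J0, j + 2 ≤ l := by
    intro j hj
    rw [Finset.mem_filter] at hj
    have := h.out j hj.1
    omega
  have e1 : J = J0 ∪ Finset.Ico l (l + (m + 1 - l)) := by
    ext j
    simp only [J0, Finset.mem_union, Finset.mem_filter, Finset.mem_Ico]
    constructor
    · intro hj
      have := h.out j hj
      rcases this with h1 | h1
      · right; omega
      · left; exact ⟨hj, by omega⟩
    · rintro (h1 | h1)
      · exact h1.1
      · exact h.sub j (by omega) (by omega)
  have e2 : J.erase p = (J0 ∪ Finset.Ico l (l + (p - l))) ∪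
      Finset.Ico (p + 1) (p + 1 + (m - p)) := by
    ext j
    have : j ∈ J ↔ j ∈ J0 ∪ Finset.Ico l (l + (m + 1 - l)) := by rw [← e1]
    have h2 := hJ0 j
    simp only [Finset.mem_union, Finset.mem_Ico, Finset.mem_erase] at this ⊢
    rw [this]
    constructor
    · rintro ⟨h3, h4 | h4⟩
      · exact Or.inl (Or.inl h4)
      · rcases Nat.lt_or_gt_of_ne h3 with h5 | h5
        · left; right; omega
        · right; omega
    · rintro ((h3 | h3) | h3)
      · exact ⟨by have := h2 h3; omega, Or.inl h3⟩
      · exact ⟨by omega, Or.inr (by omega)⟩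
      · exact ⟨by omega, Or.inr (by omega)⟩
  have hlm := h.le
  have f1 := finrank_fact k J0 l hJ0 (m + 1 - l)
  have f2 := finrank_fact k J0 l hJ0 (p - l)
  have f3 := finrank_fact k (J0 ∪ Finset.Ico l (l + (p - l))) (p + 1) (by
    intro j hj
    rcases Finset.mem_union.1 hj with h1 | h1
    · have := hJ0 j h1; omega
    · rw [Finset.mem_Ico] at h1; omega) (m - p)
  rw [← e1] at f1
  rw [← e2, f2] at f3
  rw [f1, f3]
  have := Nat.choose_mul_factorial_mul_factorial (show m + 1 - p ≤ m + 2 - l by omega)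
  rw [show m + 1 - l + 1 = m + 2 - l by omega, show m - p + 1 = m + 1 - p by omega,
    show p - l + 1 = m + 2 - l - (m + 1 - p) by omega, ← this]
  ring

lemma PhiL_bij : Function.Bijective (PhiL k h hl hp) := by
  have hfin : Module.Finite k (Us k J l m p) := Module.Finite.of_surjective _ (PhiL_surj k h hl hp)
  refine ⟨?_, PhiL_surj k h hl hp⟩
  have he : Module.finrank k (N k J) = Module.finrank k (Us k J l m p) := by
    rw [finrank_Us, card_fam, finrank_eq k h hl hp]
  let e := (Finsupp.supportedEquivFinsupp (M := N k (J.erase p)) (R := N k (J.erase p))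
    (fam l (m + 1) (m + 1 - p) : Set (Finset ℕ))).restrictScalars k
  have hfin2 : Module.Finite k ((fam l (m + 1) (m + 1 - p) : Set (Finset ℕ)) →₀ N k (J.erase p)) :=
    Module.Finite.equiv e
  rw [e.finrank_eq] at he
  have := (LinearMap.injective_iff_surjective_of_finrank_eq_finrank
    (f := e.toLinearMap ∘ₗ PhiL k h hl hp) he).2 (e.surjective.comp (PhiL_surj k h hl hp))
  exact fun a b hab => this (congrArg e hab)

include h hl hp in
lemma N_free : letI := Module.compHom (N k J) (tr k (J.erase p) J).toRingHom;
    Module.Free (N k (J.erase p)) (N k J) := by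
  letI := Module.compHom (N k J) (tr k (J.erase p) J).toRingHom
  let f : N k J →ₗ[N k (J.erase p)] Us k J l m p :=
      { toFun := PhiL k h hl hp, map_add' := map_add _,
        map_smul' := fun b a => Subtype.ext (Phi_tr_mul k h hl hp b a) }
  let e : N k J ≃ₗ[N k (J.erase p)] Us k J l m p :=
    LinearEquiv.ofBijective f (PhiL_bij k h hl hp)
  exact Module.Free.of_equiv (e.trans (Finsupp.supportedEquivFinsupp _)).symm

end Phi
end NilCox

namespace NilCox

section Fn
variable (k : Type) [Field k] (J : Finset ℕ) (l M r : ℕ)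

/-- Functions supported on `r`-subsets of `[l, M]`. -/
def FnS : Submodule k (Finset ℕ → k) where
  carrier := {f | ∀ S, S ∉ fam l M r → f S = 0}
  zero_mem' := fun _ _ => rfl
  add_mem' := fun hf hg S hS => by simp [hf S hS, hg S hS]
  smul_mem' := fun c f hf S hS => by simp [hf S hS]

/-- The module of functions, with an action of `N k J`. -/
def Fn (J : Finset ℕ) : Type := FnS k l M r

instance : AddCommGroup (Fn k l M r J) := inferInstanceAs (AddCommGroup (FnS k l M r))
instance : Module k (Fn k l M r J) := inferInstanceAs (Module k (FnS k l M r))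

variable {k J l M r}
/-- Evaluation. -/
def Fn.ev (f : Fn k l M r J) (S : Finset ℕ) : k := f.1 S

/-- Constructor. -/
def Fn.mk' (f : Finset ℕ → k) (hf : ∀ S, S ∉ fam l M r → f S = 0) : Fn k l M r J := ⟨f, hf⟩

@[simp] lemma Fn.ev_mk' (f : Finset ℕ → k) (hf : ∀ S, S ∉ fam l M r → f S = 0) (S) :
    (Fn.mk' (J := J) f hf).ev S = f S := rfl
@[simp] lemma Fn.ev_add (f g : Fn k l M r J) (S) : (f + g).ev S = f.ev S + g.ev S := rfl
@[simp] lemma Fn.ev_zero (S) : (0 : Fn k l M r J).ev S = 0 := rfl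
@[simp] lemma Fn.ev_smul (c : k) (f : Fn k l M r J) (S) : (c • f).ev S = c * f.ev S := rfl
lemma Fn.ev_out (f : Fn k l M r J) {S} (h : S ∉ fam l M r) : f.ev S = 0 := f.2 S h
lemma Fn.ext {f g : Fn k l M r J} (h : ∀ S, f.ev S = g.ev S) : f = g := Subtype.ext (funext h)
lemma Fn.ext' {f g : Fn k l M r J} (h : ∀ S ∈ fam l M r, f.ev S = g.ev S) : f = g := by
  apply Fn.ext
  intro S
  by_cases hS : S ∈ fam l M r
  · exact h S hS
  · rw [f.ev_out hS, g.ev_out hS]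

lemma mv_fam_back {i : ℕ} {S : Finset ℕ} (hi : i < M) (h1 : i + 1 ∈ S) (h0 : i ∉ S)
    (hS : mv i S ∈ fam l M r) : S ∈ fam l M r := by
  rw [mem_fam] at hS ⊢
  rw [card_mv h1 h0] at hS
  refine ⟨fun x hx => ?_, hS.2⟩
  by_cases hx1 : x = i + 1
  · have := hS.1 i (mem_mv.2 (Or.inl rfl)); omega
  · exact hS.1 x (mem_mv.2 (Or.inr ⟨hx1, hx⟩))

variable (k J l M r)
/-- Action of a generator. -/
def Top (i : ℕ) : Module.End k (Fn k l M r J) where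
  toFun f := Fn.mk' (fun S => if i ∈ J ∧ i < M ∧ i + 1 ∈ S ∧ i ∉ S then f.ev (mv i S) else 0) (by
    intro S hS
    split_ifs with h
    · exact f.ev_out fun h' => hS (mv_fam_back h.2.1 h.2.2.1 h.2.2.2 h')
    · rfl)
  map_add' f g := by
    apply Fn.ext; intro S; simp only [Fn.ev_mk', Fn.ev_add]; split_ifs <;> simp
  map_smul' c f := by
    apply Fn.ext; intro S; simp only [Fn.ev_mk', Fn.ev_smul, RingHom.id_apply]; split_ifs <;> simp

variable {k J l M r}
lemma Top_ev (i : ℕ) (f : Fn k l M r J) (S) : (Top k J l M r i f).ev S =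
    if i ∈ J ∧ i < M ∧ i + 1 ∈ S ∧ i ∉ S then f.ev (mv i S) else 0 := rfl

lemma Top_rel : NilRel J (Top k J l M r) where
  out i hi := by
    refine LinearMap.ext fun f => Fn.ext fun S => ?_
    simp [Top_ev, hi]
  sq i := by
    refine LinearMap.ext fun f => Fn.ext fun S => ?_
    simp [Top_ev, mem_mv]
  braid i := by
    refine LinearMap.ext fun f => Fn.ext fun S => ?_
    have h1 : ¬ i = i + 1 + 1 := by omega
    have h2 : ¬ i + 1 + 1 = i := by omega
    simp [Top_ev, mem_mv, h1, h2]
  comm i j hij := by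
    refine LinearMap.ext fun f => Fn.ext fun S => ?_
    have h1 : j ≠ i := by omega
    have h2 : j ≠ i + 1 := by omega
    have h3 : j + 1 ≠ i := by omega
    have h4 : j + 1 ≠ i + 1 := by omega
    simp only [Module.End.mul_apply, Top_ev, mem_mv, mv_comm hij]
    grind

noncomputable instance : Module (N k J) (Fn k l M r J) :=
  Module.compHom _ (liftN (k := k) (Top k J l M r) Top_rel).toRingHom

lemma Fn.smul_def (a : N k J) (f : Fn k l M r J) :
    a • f = liftN (k := k) (Top k J l M r) Top_rel a f := rfl

lemma Fn.y_smul (i : ℕ) (f : Fn k l M r J) : y k J i • f = Top k J l M r i f := by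
  rw [Fn.smul_def, liftN_y]

lemma Fn.alg_smul (c : k) (f : Fn k l M r J) : algebraMap k (N k J) c • f = c • f := by
  rw [Fn.smul_def, AlgHom.commutes]; rfl

instance : SMulCommClass (N k J) k (Fn k l M r J) := ⟨fun a c f => by
  rw [Fn.smul_def, Fn.smul_def, map_smul]⟩

/-- Build an `N`-linear map from generators. -/
def mkLin {X Y : Type} [AddCommGroup X] [AddCommGroup Y] [Module k X] [Module k Y]
    [Module (N k J) X] [Module (N k J) Y] (hX : ∀ (c : k) (x : X), algebraMap k (N k J) c • x = c • x)
    (hY : ∀ (c : k) (x : Y), algebraMap k (N k J) c • x = c • x)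
    (F : X →ₗ[k] Y) (hF : ∀ i x, F (y k J i • x) = y k J i • F x) : X →ₗ[N k J] Y where
  toFun := F
  map_add' := map_add F
  map_smul' a := by
    induction a using N_induction with
    | h1 c => intro x; simp [hX, hY]
    | hy i => exact hF i
    | hm a b ha hb => intro x; simp only [mul_smul, RingHom.id_apply] at *; rw [ha, hb]
    | ha a b ha hb => intro x; simp only [add_smul, RingHom.id_apply, map_add] at *; rw [ha, hb]

lemma triv_alg (c : k) (x : k) : algebraMap k (N k J) c • x = c • x := by
  rw [triv_smul, AlgHom.commutes]; rfl

lemma triv_y (i : ℕ) (x : k) : y k J i • x = 0 := by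
  rw [triv_smul, aug_y, zero_mul]

variable (k J l)
variable (m : ℕ)
/-- Restriction `V_r → W_r`. -/
def resk : Fn k l (m + 1) r J →ₗ[k] Fn k l m r J where
  toFun f := Fn.mk' (fun S => if m + 1 ∈ S then 0 else f.ev S) (by
    intro S hS
    split_ifs with h
    · rfl
    · apply f.ev_out
      intro h'
      apply hS
      rw [mem_fam] at h' ⊢
      refine ⟨fun x hx => ?_, h'.2⟩
      have := h'.1 x hx
      have : x ≠ m + 1 := fun h1 => h (h1 ▸ hx)
      omega)
  map_add' f g := by
    apply Fn.ext; intro S; simp only [Fn.ev_mk', Fn.ev_add]; split_ifs <;> simp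
  map_smul' c f := by
    apply Fn.ext; intro S; simp only [Fn.ev_mk', Fn.ev_smul, RingHom.id_apply]; split_ifs <;> simp

lemma resk_ev (f : Fn k l (m + 1) r J) (S) :
  (resk k J l m f).ev S = if m + 1 ∈ S then 0 else f.ev S := rfl

/-- Inclusion `W_r → V_{r+1}`. -/
def inck (hlm : l ≤ m) : Fn k l m r J →ₗ[k] Fn k l (m + 1) (r + 1) J where
  toFun f := Fn.mk' (fun S => if m + 1 ∈ S then f.ev (S.erase (m + 1)) else 0) (by
    intro S hS
    split_ifs with h
    · apply f.ev_out
      intro h'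
      apply hS
      rw [mem_fam] at h' ⊢
      have hc := Finset.card_erase_add_one h
      refine ⟨fun x hx => ?_, by omega⟩
      by_cases h1 : x = m + 1
      · omega
      · have := h'.1 x (Finset.mem_erase.2 ⟨h1, hx⟩)
        omega
    · rfl)
  map_add' f g := by
    apply Fn.ext; intro S; simp only [Fn.ev_mk', Fn.ev_add]; split_ifs <;> simp
  map_smul' c f := by
    apply Fn.ext; intro S; simp only [Fn.ev_mk', Fn.ev_smul, RingHom.id_apply]; split_ifs <;> simp

variable (hlm : l ≤ m)
lemma inck_ev (f : Fn k l m r J) (S) :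
  (inck k J l m hlm f).ev S = if m + 1 ∈ S then f.ev (S.erase (m + 1)) else 0 := rfl

lemma resk_y (i : ℕ) (f : Fn k l (m + 1) r J) :
    resk k J l m (y k J i • f) = y k J i • resk k J l m f := by
  apply Fn.ext
  intro S
  simp only [Fn.y_smul, Top_ev, resk_ev, mem_mv]
  grind

lemma mv_erase {i : ℕ} (hi : i < m) (S : Finset ℕ) :
    mv i (S.erase (m + 1)) = (mv i S).erase (m + 1) := by
  ext x; simp only [mem_mv, Finset.mem_erase]; grind

lemma inck_y (i : ℕ) (f : Fn k l m r J) :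
    inck k J l m hlm (y k J i • f) = y k J i • inck k J l m hlm f := by
  apply Fn.ext
  intro S
  simp only [Fn.y_smul, Top_ev, inck_ev, mem_mv, Finset.mem_erase]
  by_cases hi : i < m
  · rw [mv_erase m hi]; grind
  · grind

/-- Restriction. -/
noncomputable def res : Fn k l (m + 1) r J →ₗ[N k J] Fn k l m r J :=
  mkLin Fn.alg_smul Fn.alg_smul (resk k J l m) (resk_y k J l m)

/-- Inclusion. -/
noncomputable def inc : Fn k l m r J →ₗ[N k J] Fn k l (m + 1) (r + 1) J :=
  mkLin Fn.alg_smul Fn.alg_smul (inck k J l m hlm) (inck_y k J l m hlm)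

lemma res_ev (f : Fn k l (m + 1) r J) (S) :
  (res k J l m f).ev S = if m + 1 ∈ S then 0 else f.ev S := rfl

lemma inc_ev (f : Fn k l m r J) (S) :
  (inc k J l m hlm f).ev S = if m + 1 ∈ S then f.ev (S.erase (m + 1)) else 0 := rfl

lemma inc_k (c : k) (f : Fn k l m r J) : inc k J l m hlm (c • f) = c • inc k J l m hlm f :=
  map_smul (inck k J l m hlm) c f

lemma res_k (c : k) (f : Fn k l (m + 1) r J) : res k J l m (c • f) = c • res k J l m f :=
  map_smul (resk k J l m) c f

lemma notMem_fam {l m r : ℕ} {S} (hS : S ∈ fam l m r) : m + 1 ∉ S := fun h => by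
  rw [mem_fam] at hS
  have := hS.1 _ h
  omega

lemma inc_inj : Function.Injective (inc (r := r) k J l m hlm) := by
  intro f g h
  apply Fn.ext'
  intro S hS
  have hn := notMem_fam hS
  have := congrArg (fun f => f.ev (insert (m + 1) S)) h
  simpa [inc_ev, hn] using this

lemma res_surj : Function.Surjective (res (r := r) k J l m) := by
  intro f
  refine ⟨Fn.mk' f.ev (fun S hS => f.ev_out fun h => hS ?_), ?_⟩
  · rw [mem_fam] at h ⊢
    exact ⟨fun x hx => by have := h.1 x hx; omega, h.2⟩
  · apply Fn.ext'
    intro S hS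
    simp [res_ev, notMem_fam hS]

lemma inc_res : Function.Exact (inc (r := r) k J l m hlm) (res k J l m) := by
  intro f
  constructor
  · intro h
    refine ⟨Fn.mk' (fun S => if m + 1 ∈ S then 0 else f.ev (insert (m + 1) S)) ?_, ?_⟩
    · intro S hS
      split_ifs with h1
      · rfl
      · apply f.ev_out
        intro h2
        apply hS
        rw [mem_fam] at h2 ⊢
        rw [Finset.card_insert_of_notMem h1] at h2
        refine ⟨fun x hx => ?_, by omega⟩
        have := h2.1 x (Finset.mem_insert_of_mem hx)
        have : x ≠ m + 1 := fun h3 => h1 (h3 ▸ hx)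
        omega
    · apply Fn.ext
      intro S
      rw [inc_ev]
      have := congrArg (fun f => f.ev S) h
      simp only [res_ev, Fn.ev_zero] at this
      split_ifs with h1
      · simp [Finset.insert_erase h1]
      · simpa [h1] using this.symm
  · rintro ⟨g, rfl⟩
    apply Fn.ext
    intro S
    rw [res_ev, inc_ev]
    split_ifs <;> rfl

end Fn

section shap
variable (k : Type) [Field k] {J : Finset ℕ} {l m p : ℕ} (h : Cfg J l m) (hl : l ≤ p) (hp : p ≤ m)

/-- Pairing. -/
noncomputable def pair (f : Fn k l (m + 1) (m + 1 - p) J) : U k J p →+ k :=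
  Finsupp.liftAddHom fun S => (AddMonoidHom.mulRight (f.ev S)).comp (aug k (J.erase p)).toRingHom.toAddMonoidHom

variable {k}
lemma pair_single (f : Fn k l (m + 1) (m + 1 - p) J) (S b) :
    pair k f (Finsupp.single S b) = aug k _ b * f.ev S := by
  unfold pair
  rw [Finsupp.liftAddHom_apply_single]; rfl

lemma pair_add (f g : Fn k l (m + 1) (m + 1 - p) J) (u) : pair k (f + g) u = pair k f u + pair k g u := by
  induction u using Finsupp.induction_linear with
  | zero => simp
  | add u v hu hv => rw [map_add, hu, hv, map_add, map_add]; ring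
  | single S b => simp only [pair_single, Fn.ev_add]; ring

include h in
lemma pair_Rop (i : ℕ) (f : Fn k l (m + 1) (m + 1 - p) J) (u) :
    pair k f (Rop k J l m p i u) = pair k (y k J i • f) u := by
  rw [Fn.y_smul]
  induction u using Finsupp.induction_linear with
  | zero => simp
  | add u v hu hv => rw [map_add, map_add, hu, hv, map_add]
  | single S b =>
    rw [pair_single]
    by_cases hS : S ∈ fam l (m + 1) (m + 1 - p)
    swap
    · rw [Rop_bad k (by tauto), map_zero, Fn.ev_out _ hS, mul_zero]
    by_cases hi : i ∈ J
    swap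
    · rw [Rop_bad k (by tauto), map_zero, Top_ev, if_neg (by tauto), mul_zero]
    have him : i < m + 1 := by have := h.out i hi; have := h.le; omega
    rw [Top_ev]
    by_cases h0 : i ∈ S <;> by_cases h1 : i + 1 ∈ S
    · rw [Rop_in k hS hi b h0 h1, pair_single]; simp [h0]
    · rw [Rop_zero k hS hi b h0 h1]; simp [h0]
    · rw [Rop_mv k hS hi b h0 h1, pair_single]; simp [h0, h1, hi, him]
    · rw [Rop_out k hS hi b h0 h1, pair_single]; simp [h1]

lemma pair_ract (a : N k J) (f : Fn k l (m + 1) (m + 1 - p) J) (u) :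
    pair k f (ract k h hp a u) = pair k (a • f) u := by
  induction a using N_induction generalizing f u with
  | h1 c =>
    rw [ract_alg, Fn.alg_smul]
    induction u using Finsupp.induction_linear with
    | zero => simp
    | add u v hu hv => rw [smul_add, map_add, map_add, hu, hv]
    | single S b =>
      rw [Finsupp.smul_single, pair_single, pair_single, map_smul, Fn.ev_smul, smul_eq_mul]; ring
  | hy i => rw [ract_y, pair_Rop h]
  | hm a b ha hb => rw [ract_mul, Module.End.mul_apply, hb, ha, mul_smul]
  | ha a b ha hb => rw [ract_add, LinearMap.add_apply, map_add, ha, hb, add_smul, pair_add]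

variable (k J l m p)
/-- Evaluation at the base point. -/
def lamF : Fn k l (m + 1) (m + 1 - p) J →ₗ[k] k where
  toFun f := f.ev (S0 m p)
  map_add' _ _ := rfl
  map_smul' _ _ := rfl

variable {k J l m p}
lemma lamF_smul (a : N k J) (f : Fn k l (m + 1) (m + 1 - p) J) :
    lamF k J l m p (a • f) = pair k f (Phi k h hp a) := by
  unfold Phi
  rw [pair_ract, pair_single, map_one, one_mul]; rfl

include h hl hp
lemma lamF_tr (b : N k (J.erase p)) (f : Fn k l (m + 1) (m + 1 - p) J) :
    lamF k J l m p ((tr k (J.erase p) J).toRingHom b • f) = b • lamF k J l m p f := by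
  show lamF k J l m p ((tr k (J.erase p) J) b • f) = b • lamF k J l m p f
  rw [lamF_smul h hp]
  unfold Phi
  rw [ract_S0 k h hl hp, pair_single, one_mul, triv_smul]; rfl

lemma hV0F (f : Fn k l (m + 1) (m + 1 - p) J) (hf : ∀ a : N k J, lamF k J l m p (a • f) = 0) :
    f = 0 := by
  apply Fn.ext'
  intro S hS
  obtain ⟨a, ha⟩ := Phi_hit k h hl hp _ S hS rfl
  have := hf a
  rw [lamF_smul h hp, ha, pair_single] at this
  simpa using this

lemma hVF (g : N k J →+ k) (hg : ∀ (b : N k (J.erase p)) a,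
    g ((tr k (J.erase p) J).toRingHom b * a) = b • g a) :
    ∃ v : Fn k l (m + 1) (m + 1 - p) J, ∀ a, g a = lamF k J l m p (a • v) := by
  classical
  choose F hF using fun S hS => Phi_hit k h hl hp _ S hS rfl
  let v : Fn k l (m + 1) (m + 1 - p) J :=
    Fn.mk' (fun S => if hS : S ∈ fam l (m + 1) (m + 1 - p) then g (F S hS) else 0)
      (fun S hS => by simp [hS])
  refine ⟨v, fun a => ?_⟩
  rw [lamF_smul h hp]
  let E : U k J p → N k J := fun u => u.sum fun S b => tr k (J.erase p) J b *
    (if hS : S ∈ fam l (m + 1) (m + 1 - p) then F S hS else 0)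
  have hEadd : ∀ u v, E (u + v) = E u + E v := fun u v =>
    Finsupp.sum_add_index' (by simp) (by intro S b c; rw [map_add, add_mul])
  have hEs : ∀ S b, E (Finsupp.single S b) = tr k (J.erase p) J b *
    (if hS : S ∈ fam l (m + 1) (m + 1 - p) then F S hS else 0) := fun S b =>
    Finsupp.sum_single_index (by simp)
  have h0 : E 0 = 0 := Finsupp.sum_zero_index
  have hE : ∀ u ∈ Us k J l m p, Phi k h hp (E u) = u := by
    intro u hu
    have key : ∀ u, Phi k h hp (E u) = u.filter (· ∈ fam l (m + 1) (m + 1 - p)) := by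
      intro u
      induction u using Finsupp.induction_linear with
      | zero => rw [h0, Finsupp.filter_zero]; unfold Phi ract; rw [map_zero]; rfl
      | add u v hu hv => rw [hEadd, Phi_add, hu, hv, Finsupp.filter_add]
      | single S b =>
        rw [hEs, Phi_tr_mul k h hl hp]
        by_cases hS : S ∈ fam l (m + 1) (m + 1 - p)
        · rw [dif_pos hS, hF, Finsupp.smul_single, smul_eq_mul, mul_one,
            Finsupp.filter_single_of_pos _ hS]
        · rw [dif_neg hS, Finsupp.filter_single_of_neg _ hS]
          unfold Phi ract; rw [map_zero, MulOpposite.unop_zero, LinearMap.zero_apply, smul_zero]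
    rw [key, Finsupp.filter_eq_self_iff]
    intro x hx
    exact hu (Finsupp.mem_support_iff.2 hx)
  have hgE : ∀ u, g (E u) = pair k v u := by
    intro u
    induction u using Finsupp.induction_linear with
    | zero => rw [h0, map_zero, map_zero]
    | add u v hu hv => rw [hEadd, map_add, map_add, hu, hv]
    | single S b =>
      rw [hEs, pair_single, Fn.ev_mk']
      have := hg b (if hS : S ∈ fam l (m + 1) (m + 1 - p) then F S hS else 0)
      refine this.trans ?_
      rw [triv_smul]
      congr 1
      split_ifs <;> simp
  rw [← hgE]
  congr 1
  apply (PhiL_bij k h hl hp).1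
  apply Subtype.ext
  exact (hE _ (Phi_mem k h hl hp a)).symm

end shap
end NilCox

namespace NilCox

section Main
variable (k : Type) [Field k]

lemma ext_field {M P : Type} [AddCommGroup M] [AddCommGroup P] [Module k M] [Module k P]
    (f : M →ₗ[k] P) (φ : M →ₗ[k] k) (h : ∀ x, f x = 0 → φ x = 0) :
    ∃ ψ : P →ₗ[k] k, ∀ x, φ x = ψ (f x) := by
  obtain ⟨σ, hσ⟩ := f.rangeRestrict.exists_rightInverse_of_surjective f.range_rangeRestrict
  obtain ⟨ψ, hψ⟩ := LinearMap.exists_extend (φ ∘ₗ σ)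
  refine ⟨ψ, fun x => ?_⟩
  have h1 : ψ (f x) = φ (σ (f.rangeRestrict x)) := LinearMap.congr_fun hψ (f.rangeRestrict x)
  have h2 : f (σ (f.rangeRestrict x)) = f x := congrArg Subtype.val (LinearMap.congr_fun hσ (f.rangeRestrict x))
  rw [h1, ← sub_eq_zero, ← map_sub]
  apply h
  rw [map_sub, h2, sub_self]

variable {C : ℕ → Type} [∀ n, AddCommGroup (C n)]

lemma rank_zero {J : Finset ℕ} [∀ n, Module (N k J) (C n)] {D : ∀ n, C (n + 1) →ₗ[N k J] C n}
    (hD : IsRes D) (e : C 0 ≃ₗ[N k J] k) : Module.rank k (Hc k D k 0) = 1 := by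
  let F : k →ₗ[k] (C 1 →ₗ[N k J] k) := LinearMap.toSpanSingleton k _ (e.toLinearMap ∘ₗ D 0)
  have hF : ∀ c x, F c x = c * e (D 0 x) := fun _ _ => rfl
  have : Module.rank k ((⊤ : Submodule k k) ⧸ (⊥ : Submodule k k).comap (⊤ : Submodule k k).subtype)
      = Module.rank k (Hc k D k 0) := by
    apply rank_sub_quot k F _ _ _ _ (Bc_le_Zc k hD 0)
    · intro c _
      rw [mem_Zc]
      intro y
      rw [hF, hD.dd, map_zero, mul_zero]
    · intro φ hφ
      rw [mem_Zc] at hφ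
      have hs : ∀ c : k, ∃ x, e (D 0 x) = c := fun c => by
        obtain ⟨x, hx⟩ := hD.surj (e.symm c)
        exact ⟨x, by rw [hx, e.apply_symm_apply]⟩
      obtain ⟨x1, hx1⟩ := hs 1
      refine ⟨φ x1, trivial, ?_⟩
      rw [mem_Bc_zero, sub_eq_zero]
      ext x
      rw [hF]
      have h1 : D 0 (x - algebraMap k (N k J) (e (D 0 x)) • x1) = 0 := by
        apply e.injective
        rw [map_sub, map_smul, map_sub, map_smul, hx1, triv_alg, smul_eq_mul, mul_one, sub_self,
          map_zero]
      obtain ⟨z, hz⟩ := (hD.exact 0 _).1 h1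
      have h2 := hφ z
      rw [hz, map_sub, map_smul, triv_alg, sub_eq_zero, smul_eq_mul] at h2
      rw [h2, mul_comm]
    · intro c _
      rw [mem_Bc_zero, Submodule.mem_bot]
      constructor
      · intro h
        obtain ⟨x, hx⟩ := hD.surj (e.symm 1)
        have := LinearMap.congr_fun h x
        rw [hF, hx, e.apply_symm_apply, mul_one] at this
        exact this
      · rintro rfl; exact map_zero F
  rw [← this]
  have h2 : (⊥ : Submodule k k).comap (⊤ : Submodule k k).subtype = ⊥ := by
    rw [eq_bot_iff]
    intro x hx
    simpa using hx
  rw [(Submodule.quotEquivOfEqBot _ h2).rank_eq, rank_top, Module.rank_self]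

lemma empty_alg (a : N k ∅) : a = algebraMap k _ (aug k ∅ a) := by
  induction a using N_induction with
  | h1 c => rw [AlgHom.commutes]; rfl
  | hy i => rw [aug_y, map_zero, (y_rel k ∅).out i (by simp)]
  | hm a b ha hb => rw [map_mul, map_mul, ← ha, ← hb]
  | ha a b ha hb => rw [map_add, map_add, ← ha, ← hb]

lemma base_succ [∀ n, Module (N k ∅) (C n)] {D : ∀ n, C (n + 1) →ₗ[N k ∅] C n}
    (hD : IsRes D) (d : ℕ) : Module.rank k (Hc k D k (d + 1)) = 0 := by
  letI : ∀ n, Module k (C n) := fun n => Module.compHom (C n) (algebraMap k (N k ∅))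
  have hk : ∀ n (c : k) (x : C n), c • x = algebraMap k (N k ∅) c • x := fun _ _ _ => rfl
  have hle : Zc k D k (d + 1) ≤ Bc k D k (d + 1) := by
    intro φ hφ
    rw [mem_Zc] at hφ
    rw [mem_Bc_succ]
    obtain ⟨ψ, hψ⟩ := ext_field k
      { toFun := D (d + 1), map_add' := map_add _, map_smul' := fun c x => by
          rw [hk, map_smul]; rfl }
      { toFun := φ, map_add' := map_add φ, map_smul' := fun c x => by
          rw [hk, map_smul, triv_alg]; rfl }
      (fun x hx => by
        obtain ⟨z, rfl⟩ := (hD.exact (d + 1) x).1 hx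
        exact hφ z)
    refine ⟨{ toFun := ψ, map_add' := map_add ψ, map_smul' := fun a x => ?_ }, hψ⟩
    rw [empty_alg k a, ← hk, map_smul, RingHom.id_apply, triv_alg]
  have : (Bc k D k (d + 1)).comap (Zc k D k (d + 1)).subtype = ⊤ := by
    rw [eq_top_iff]
    rintro ⟨x, hx⟩ _
    exact hle hx
  have hs : Subsingleton (Hc k D k (d + 1)) := Submodule.Quotient.subsingleton_iff.2 this
  exact rank_subsingleton' _ _

lemma Fn_point {J : Finset ℕ} [∀ n, Module (N k J) (C n)] {D : ∀ n, C (n + 1) →ₗ[N k J] C n}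
    (hD : IsRes D) {l M r : ℕ} (S1 : Finset ℕ) (hS1 : fam l M r = {S1}) (n : ℕ) :
    Module.rank k (Hc k D (Fn k l M r J) n) = Module.rank k (Hc k D k n) := by
  let lamk : Fn k l M r J →ₗ[k] k :=
    { toFun := fun f => f.ev S1, map_add' := fun _ _ => rfl, map_smul' := fun _ _ => rfl }
  let lam : Fn k l M r J →ₗ[N k J] k := mkLin Fn.alg_smul triv_alg lamk (by
    intro i f
    rw [triv_y]
    show (y k J i • f).ev S1 = 0
    rw [Fn.y_smul, Top_ev]
    split_ifs with h
    · apply f.ev_out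
      rw [hS1, Finset.mem_singleton]
      intro h'
      apply h.2.2.2
      rw [← h']
      exact mem_mv.2 (Or.inl rfl)
    · rfl)
  have hll : ∀ f, lamk f = lam f := fun _ => rfl
  refine shapiro_rank k (RingHom.id (N k J)) (fun _ _ _ => rfl) (fun _ _ => rfl) lamk
    (fun b v => ?_) (fun g hg => ?_) (fun v hv => ?_) hD hD n
  · rw [hll, hll, map_smul]; rfl
  · refine ⟨Fn.mk' (fun S => if S = S1 then g 1 else 0) (fun S hS => ?_), fun a => ?_⟩
    · rw [hS1, Finset.mem_singleton] at hS; simp [hS]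
    · have := hg a 1
      rw [mul_one] at this
      rw [hll, map_smul, ← hll]
      refine this.trans ?_
      congr 1
      show _ = if S1 = S1 then g 1 else 0
      rw [if_pos rfl]
  · have := hv 1
    rw [one_smul] at this
    apply Fn.ext'
    intro S hS
    rw [hS1, Finset.mem_singleton] at hS
    subst hS
    exact this

/-- Map to the socle vector. -/
noncomputable def io (J : Finset ℕ) {l m p r : ℕ} (hl : l ≤ p) (hr : m = r + p) : k →ₗ[N k J] Fn k l m r J :=
  mkLin triv_alg Fn.alg_smul
    { toFun := fun c => Fn.mk' (fun S => if S = Finset.Icc (p + 1) m then c else 0) (by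
        intro S hS
        rw [if_neg]
        rintro rfl
        apply hS
        rw [mem_fam]
        refine ⟨fun x hx => ?_, by simp; omega⟩
        rw [Finset.mem_Icc] at hx
        omega)
      map_add' := fun c c' => by
        apply Fn.ext; intro S; simp only [Fn.ev_mk', Fn.ev_add]; split_ifs <;> simp
      map_smul' := fun c c' => by
        apply Fn.ext; intro S; simp only [Fn.ev_mk', Fn.ev_smul, RingHom.id_apply]; split_ifs <;> simp }
    (by
      intro i c
      rw [triv_y, map_zero, Fn.y_smul]
      apply Fn.ext
      intro S
      rw [Top_ev]
      split_ifs with h1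
      · symm
        show (if mv i S = Finset.Icc (p + 1) m then c else 0) = 0
        rw [if_neg]
        intro h2
        have h3 : i ∈ Finset.Icc (p + 1) m := h2 ▸ mem_mv.2 (Or.inl rfl)
        have h4 : i + 1 ∈ Finset.Icc (p + 1) m := by rw [Finset.mem_Icc] at h3 ⊢; omega
        rw [← h2, mem_mv] at h4
        omega
      · rfl)

lemma io_ev (J : Finset ℕ) {l m p r : ℕ} (hl : l ≤ p) (hr : m = r + p) (c : k) (S) :
    Fn.ev (J := J) (l := l) (M := m) (r := r) (io k J (l := l) (m := m) (p := p) (r := r) hl hr c) S = if S = Finset.Icc (p + 1) m then c else 0 := rfl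

variable {J : Finset ℕ} {l m p : ℕ} (h : Cfg J l m) (hl : l ≤ p) (hp : p ≤ m)

section step
variable [∀ n, Module (N k J) (C n)] [∀ n, Module (N k (J.erase p)) (C n)]
  {D : ∀ n, C (n + 1) →ₗ[N k J] C n} {D' : ∀ n, C (n + 1) →ₗ[N k (J.erase p)] C n}
  (hc : ∀ n (b : N k (J.erase p)) (x : C n), b • x = (tr k (J.erase p) J).toRingHom b • x)
  (hDD : ∀ n x, D' n x = D n x) (hD : IsRes D) (hD' : IsRes D')
  (e : C 0 ≃ₗ[N k J] k)

include h hl hp hc hDD hD hD'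
lemma step1 (r : ℕ) (hr : r = m + 1 - p) (n : ℕ) :
    Module.rank k (Hc k D (Fn k l (m + 1) r J) n) = Module.rank k (Hc k D' k n) := by
  subst hr
  exact shapiro_rank k _ hc hDD (lamF k J l m p) (lamF_tr h hl hp) (hVF h hl hp) (hV0F h hl hp)
    hD hD' n

include e in
lemma step2 (r : ℕ) (hr : r = m + 1 - p) (io : k →ₗ[N k J] Fn k l (m + 1) r J)
    (hio : ∀ c, (io c).ev (S0 m p) = c) (n : ℕ) (φ) (hφ : φ ∈ Zc k D (Fn k l (m + 1) r J) n) :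
    ∃ φ' ∈ Zc k D k n, io ∘ₗ φ' - φ ∈ Bc k D (Fn k l (m + 1) r J) n := by
  subst hr
  refine shapiro_surj k _ (tr k J (J.erase p)).toRingHom
    (fun b => tr_tr k (Finset.erase_subset _ _) b) hc hDD (fun a c => ?_)
    (lamF k J l m p) (lamF_tr h hl hp) (hVF h hl hp) (hV0F h hl hp)
    hD hD' (fun a x => ?_) io hio n φ hφ
  · rw [triv_smul, triv_smul]
    congr 1
    exact (aug_tr k J (J.erase p) a).symm
  · apply e.injective
    rw [map_smul, map_smul, triv_smul, triv_smul]
    congr 1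
    exact (aug_tr k _ _ _).trans (aug_tr k _ _ _)

include e in
lemma step3 (r : ℕ) (hr : m = r + p) (n : ℕ) (φ) (hφ : φ ∈ Zc k D (Fn k l (m + 1) (r + 1) J) n) :
    ∃ φ' ∈ Zc k D (Fn k l m r J) n,
      inc k J l m h.le ∘ₗ φ' - φ ∈ Bc k D (Fn k l (m + 1) (r + 1) J) n := by
  obtain ⟨φ', h1, h2⟩ := step2 k h hl hp hc hDD hD hD' e (r + 1) (by omega)
    (inc k J l m h.le ∘ₗ io k J hl hr) (fun c => by
      rw [LinearMap.comp_apply, inc_ev, if_pos (by rw [S0, Finset.mem_Icc]; omega), io_ev, if_pos]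
      ext x
      simp only [S0, Finset.mem_erase, Finset.mem_Icc]
      omega) n φ hφ
  refine ⟨io k J hl hr ∘ₗ φ', ?_, h2⟩
  rw [mem_Zc] at h1 ⊢
  intro y
  rw [LinearMap.comp_apply, h1, map_zero]

end step

theorem main_rank (q : ℕ) : ∀ (J : Finset ℕ), J.card = q →
    ∀ (C : ℕ → Type) [∀ n, AddCommGroup (C n)] [∀ n, Module (N k J) (C n)]
      (D : ∀ n, C (n + 1) →ₗ[N k J] C n) (hD : IsRes D) (e : C 0 ≃ₗ[N k J] k) (d : ℕ),
      Module.rank k (Hc k D k d) = (Nat.multichoose q d : ℕ) := by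
  induction q with
  | zero =>
    intro J hJ C _ _ D hD e d
    rw [Finset.card_eq_zero] at hJ
    subst hJ
    cases d with
    | zero => rw [rank_zero k hD e]; simp
    | succ d => rw [base_succ k hD]; simp
  | succ q ih =>
    intro J hJ C _ _ D hD e d
    obtain ⟨l, m, h⟩ := exists_cfg J (Finset.card_pos.1 (by omega))
    have hlm := h.le
    have IH : ∀ r, r < m + 1 - l → (∀ d, Module.rank k (Hc k D (Fn k l (m + 1) (r + 1) J) d) =
        (Nat.multichoose q d : ℕ)) ∧ (∀ n, ∀ φ ∈ Zc k D (Fn k l (m + 1) (r + 1) J) n,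
          ∃ φ' ∈ Zc k D (Fn k l m r J) n,
          inc k J l m h.le ∘ₗ φ' - φ ∈ Bc k D (Fn k l (m + 1) (r + 1) J) n) := by
      intro r hr
      obtain ⟨p, hp⟩ : ∃ p, m = r + p := ⟨m - r, by omega⟩
      letI : ∀ n, Module (N k (J.erase p)) (C n) := fun n =>
        Module.compHom (C n) (tr k (J.erase p) J).toRingHom
      have hc : ∀ n (b : N k (J.erase p)) (x : C n),
        b • x = (tr k (J.erase p) J).toRingHom b • x := fun _ _ _ => rfl
      let D' : ∀ n, C (n + 1) →ₗ[N k (J.erase p)] C n := fun n =>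
        { toFun := D n, map_add' := map_add _, map_smul' := fun b x => by
            rw [hc, map_smul]; rfl }
      have hDD : ∀ n x, D' n x = D n x := fun _ _ => rfl
      have hD' : IsRes D' :=
        { exact := hD.exact, surj := hD.surj, proj := fun n => by
            haveI := hD.proj n
            exact proj_restrict _ (hc (n + 1)) (N_free k h (by omega) (by omega)) }
      have e' : C 0 ≃ₗ[N k (J.erase p)] k :=
        { e with
          map_smul' := fun b x => by
            show e (b • x) = b • e x
            rw [hc, map_smul, triv_smul, triv_smul]
            congr 1
            exact aug_tr k _ _ _ }
      refine ⟨fun d => ?_, fun n φ hφ =>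
        step3 k h (by omega) (by omega) hc hDD hD hD' e r hp n φ hφ⟩
      rw [step1 k h (p := p) (by omega) (by omega) hc hDD hD hD' (r + 1) (by omega) d]
      refine ih (J.erase p) ?_ C D' hD' e' d
      rw [Finset.card_erase_of_mem (h.sub p (by omega) (by omega))]
      omega
    have top : ∀ d, Module.rank k (Hc k D (Fn k l m (m + 1 - l) J) d) =
        Module.rank k (Hc k D (Fn k l m 0 J) d) := fun d => by
      rw [Fn_point k hD (Finset.Icc l m), Fn_point k hD ∅]
      · exact Finset.powersetCard_zero _
      · rw [fam, show m + 1 - l = (Finset.Icc l m).card by simp]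
        exact Finset.powersetCard_self _
    have key : ∀ d r, r ≤ m + 1 - l → Module.rank k (Hc k D (Fn k l m r J) d) =
        (Nat.multichoose (q + 1) d : ℕ) := by
      intro d
      induction d with
      | zero =>
        have : ∀ r, r < m + 1 - l → Module.rank k (Hc k D (Fn k l m r J) 0) =
            (Nat.multichoose (q + 1) 0 : ℕ) := fun r hr => by
          rw [rank_H_zero k (inc k J l m h.le) (res k J l m) (inc_k k J l m h.le)
            (inc_inj k J l m h.le) (inc_res k J l m h.le) (IH r hr).2 hD, (IH r hr).1]
          simp
        intro r hr
        rcases Nat.lt_or_eq_of_le hr with hr | rfl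
        · exact this r hr
        · rw [top]; exact this 0 (by omega)
      | succ d ihd =>
        have : ∀ r, r < m + 1 - l → Module.rank k (Hc k D (Fn k l m r J) (d + 1)) =
            (Nat.multichoose (q + 1) (d + 1) : ℕ) := fun r hr => by
          rw [rank_H_succ k (inc k J l m h.le) (res k J l m) (inc_k k J l m h.le)
            (res_k k J l m) (inc_inj k J l m h.le) (res_surj k J l m)
            (inc_res k J l m h.le) (IH r hr).2 hD, (IH r hr).1, ihd (r + 1) hr,
            Nat.multichoose_succ_succ]
          simp
        intro r hr
        rcases Nat.lt_or_eq_of_le hr with hr | rfl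
        · exact this r hr
        · rw [top]; exact this 0 (by omega)
    rw [← key d 0 (by omega), Fn_point k hD ∅ (Finset.powersetCard_zero _)]

end Main
end NilCox

namespace NilCox
open CategoryTheory

lemma rank_homology (k : Type) [Field k] (S : ShortComplex (ModuleCat.{0} k)) :
    Module.rank k S.homology =
      Module.rank k (LinearMap.ker S.g.hom ⧸
        (LinearMap.range S.f.hom).comap (LinearMap.ker S.g.hom).subtype) := by
  rw [(S.moduleCatHomologyIso).toLinearEquiv.rank_eq]
  have h : LinearMap.range S.moduleCatToCycles =
      (LinearMap.range S.f.hom).comap (LinearMap.ker S.g.hom).subtype := by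
    ext x
    simp only [LinearMap.mem_range, Submodule.mem_comap]
    constructor
    · rintro ⟨y, rfl⟩; exact ⟨y, rfl⟩
    · rintro ⟨y, h⟩; exact ⟨y, Subtype.ext h⟩
  rw [← h]
  rfl

lemma homology_compare (k : Type) [Field k] (K : CochainComplex (ModuleCat.{0} k) ℕ) (i j l : ℕ)
    (hi : (ComplexShape.up ℕ).prev j = i) (hl : (ComplexShape.up ℕ).next j = l)
    {W : Type} [AddCommGroup W] [Module k W] (F : (K.X j : Type) →ₗ[k] W)
    (hF : Function.Surjective F) (Z' B' : Submodule k W) (hB' : B' ≤ Z')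
    (hZ : ∀ z : K.X j, (K.d j l).hom z = 0 ↔ F z ∈ Z')
    (hB : ∀ z : K.X j, F z ∈ B' ↔ ∃ y : K.X i, (K.d i j).hom y = z) :
    Module.rank k (K.homology j) = Module.rank k (Z' ⧸ B'.comap Z'.subtype) := by
  have e := ShortComplex.homologyMapIso (K.isoSc' i j l hi hl)
  refine e.toLinearEquiv.rank_eq.trans ?_
  rw [rank_homology]
  refine rank_sub_quot k F _ _ _ _ hB' ?_ ?_ ?_
  · intro z hz
    exact (hZ z).1 hz
  · intro w hw
    obtain ⟨z, rfl⟩ := hF w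
    exact ⟨z, (hZ z).2 hw, by rw [sub_self]; exact Submodule.zero_mem _⟩
  · intro z hz
    exact hB z

section Bridge
variable (k : Type) [Field k] {A : Type} [Ring A] [Algebra k A] [Module A k]
  [SMulCommClass A k k] (hs : ∀ (c x : k), algebraMap k A c • x = c * x)
  (P : ProjectiveResolution (ModuleCat.of A k))

/-- Augmented resolution, objects. -/
noncomputable def Mob : ℕ → ModuleCat.{0} A
  | 0 => ModuleCat.of A k
  | n + 1 => P.complex.X n

/-- Augmented resolution, differentials. -/
noncomputable def Md : ∀ n, (Mob k P (n + 1) : Type) →ₗ[A] (Mob k P n : Type)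
  | 0 => (P.π.f 0).hom
  | n + 1 => (P.complex.d (n + 1) n).hom

lemma Md_res : IsRes (C := fun n => (Mob k P n : Type)) (Md k P) where
  exact n := by
    cases n with
    | zero =>
      have h := ShortComplex.exact_of_g_is_cokernel
        (ShortComplex.mk _ _ P.complex_d_comp_π_f_zero) P.isColimitCokernelCofork
      rw [ShortComplex.moduleCat_exact_iff] at h
      intro x
      constructor
      · exact h x
      · rintro ⟨y, rfl⟩
        exact LinearMap.congr_fun (congrArg ModuleCat.Hom.hom P.complex_d_comp_π_f_zero) y
    | succ n =>
      have h := P.exact_succ n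
      rw [ShortComplex.moduleCat_exact_iff] at h
      intro x
      constructor
      · exact h x
      · rintro ⟨y, rfl⟩
        exact LinearMap.congr_fun (congrArg ModuleCat.Hom.hom
          (P.complex.d_comp_d (n + 2) (n + 1) n)) y
  surj := (ModuleCat.epi_iff_surjective (P.π.f 0)).1 inferInstance
  proj n := (IsProjective.iff_projective (P.complex.X n)).2 (P.projective n)

include hs in
lemma lin_smul (M : ModuleCat.{0} A) (c : k) (f : M ⟶ ModuleCat.of A k) (x : M) :
    ((Linear.homModule (R := k) M (ModuleCat.of A k)).toSMul.smul c f).hom x = c * (f.hom x : k) := by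
  letI := ModuleCat.moduleOfAlgebraModule (k := k) (ModuleCat.of A k)
  have h : ((Linear.homModule (R := k) M (ModuleCat.of A k)).toSMul.smul c f).hom x
    = (ModuleCat.moduleOfAlgebraModule (k := k) (ModuleCat.of A k)).toSMul.smul c (f.hom x) := rfl
  rw [h]
  haveI := ModuleCat.isScalarTower_of_algebra_moduleCat (k := k) (ModuleCat.of A k)
  have h2 := @algebraMap_smul k _ A _ _ (ModuleCat.of A k) _ _
    (ModuleCat.moduleOfAlgebraModule (k := k) (ModuleCat.of A k)) this c (f.hom x)
  exact h2.symm.trans (hs c _)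

include hs in
lemma ext_rank (d : ℕ) :
    Module.rank k (((Ext k (ModuleCat.{0} A) d).obj
          (Opposite.op (ModuleCat.of A k))).obj (ModuleCat.of A k)) =
      Module.rank k (Hc k (C := fun n => (Mob k P n : Type)) (Md k P) k d) := by
  rw [(P.isoExt d (ModuleCat.of A k)).toLinearEquiv.rank_eq]
  let F : (P.complex.X d ⟶ ModuleCat.of A k) →+ ((Mob k P (d + 1) : Type) →ₗ[A] k) :=
    { toFun := fun f => f.hom
      map_add' := fun f g => rfl
      map_zero' := rfl }
  have hF : Function.Bijective F := ⟨fun f g h => ModuleCat.hom_ext h, fun g => ⟨ModuleCat.ofHom g, rfl⟩⟩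
  have hZ : ∀ z : P.complex.X d ⟶ ModuleCat.of A k, P.complex.d (d + 1) d ≫ z = 0 ↔
      F z ∈ Zc k (C := fun n => (Mob k P n : Type)) (Md k P) k d := by
    intro z
    rw [mem_Zc]
    constructor
    · intro h y
      exact LinearMap.congr_fun (congrArg ModuleCat.Hom.hom h) y
    · intro h
      ext y
      exact h y
  let F' : ((P.complex.linearYonedaObj k (ModuleCat.of A k)).X d : Type) →ₗ[k]
      ((Mob k P (d + 1) : Type) →ₗ[A] k) :=
    { toFun := fun f => F f, map_add' := fun f g => F.map_add f g,
      map_smul' := fun c f => LinearMap.ext fun x => lin_smul k hs _ c f x }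
  cases d with
  | zero =>
    refine homology_compare k (P.complex.linearYonedaObj k (ModuleCat.of A k)) 0 0 1
      (by simp) (by simp) F' hF.2 _ _ (Bc_le_Zc k (Md_res k P) 0) ?_ ?_
    · intro z
      rw [ChainComplex.linearYonedaObj_d]
      exact hZ z
    · intro z
      rw [HomologicalComplex.shape _ 0 0 (by simp), mem_Bc_zero]
      constructor
      · intro h
        refine ⟨0, ?_⟩
        exact (hF.1 (h.trans (map_zero F).symm)).symm
      · rintro ⟨y, rfl⟩
        exact map_zero F
  | succ d =>
    refine homology_compare k (P.complex.linearYonedaObj k (ModuleCat.of A k)) d (d + 1) (d + 2)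
      (by simp) (by simp) F' hF.2 _ _ (Bc_le_Zc k (Md_res k P) (d + 1)) ?_ ?_
    · intro z
      rw [ChainComplex.linearYonedaObj_d]
      exact hZ z
    · intro z
      rw [mem_Bc_succ, ChainComplex.linearYonedaObj_d]
      constructor
      · rintro ⟨ψ, h⟩
        exact ⟨ModuleCat.ofHom ψ, hF.1 (LinearMap.ext fun y => (h y).symm)⟩
      · rintro ⟨y, rfl⟩
        exact ⟨ModuleCat.Hom.hom (R := A) (A := P.complex.X d) (B := ModuleCat.of A k) y, fun _ => rfl⟩
end Bridge
end NilCox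

namespace NilCox
open CategoryTheory

section Final
variable (k : Type) [Field k] (n : ℕ)

/-- Forward map. -/
noncomputable def fwd : Nring k n →ₐ[k] N k (Finset.Icc 1 (n - 1)) :=
  RingQuot.liftAlgHom k ⟨FreeAlgebra.lift k (fun i : NIdx n => y k (Finset.Icc 1 (n - 1)) i.1), by
    have hr := y_rel k (Finset.Icc 1 (n - 1))
    rintro x y h
    induction h with
    | sq i => simp [hr.sq]
    | braid i j h => simp [h, hr.braid]
    | comm i j h =>
      simp only [map_mul, FreeAlgebra.lift_ι_apply]
      rcases h with h | h
      · exact hr.comm _ _ h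
      · exact (hr.comm _ _ h).symm⟩

/-- Generators of `Nring`. -/
noncomputable def Yq (i : ℕ) : Nring k n :=
  if h : 1 ≤ i ∧ i + 1 ≤ n then RingQuot.mkAlgHom k (NRel k n) (FreeAlgebra.ι k ⟨i, h⟩) else 0

lemma Yq_rel : NilRel (Finset.Icc 1 (n - 1)) (Yq k n) where
  out i h := by
    unfold Yq
    rw [dif_neg]
    rintro ⟨h1, h2⟩
    apply h
    rw [Finset.mem_Icc]
    omega
  sq i := by
    unfold Yq
    split_ifs with h
    · simpa using RingQuot.mkAlgHom_rel k (NRel.sq (k := k) (n := n) ⟨i, h⟩)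
    · simp
  braid i := by
    unfold Yq
    split_ifs with h h'
    · simpa using RingQuot.mkAlgHom_rel k (NRel.braid (k := k) (n := n) ⟨i, h⟩ ⟨i + 1, h'⟩ rfl)
    all_goals simp
  comm i j hij := by
    unfold Yq
    split_ifs with h h'
    · simpa using RingQuot.mkAlgHom_rel k (NRel.comm (k := k) (n := n) ⟨i, h⟩ ⟨j, h'⟩ (Or.inl hij))
    all_goals simp

/-- Backward map. -/
noncomputable def bwd : N k (Finset.Icc 1 (n - 1)) →ₐ[k] Nring k n := liftN (Yq k n) (Yq_rel k n)

lemma bwd_fwd (a : Nring k n) : bwd k n (fwd k n a) = a := by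
  have : (bwd k n).comp (fwd k n) = AlgHom.id k _ := by
    apply RingQuot.ringQuot_ext'
    ext i
    simp only [AlgHom.comp_apply, Function.comp, AlgHom.id_apply, fwd, RingQuot.liftAlgHom_mkAlgHom_apply,
      FreeAlgebra.lift_ι_apply, bwd, liftN_y, AlgHom.toLinearMap_apply]
    unfold Yq
    rw [dif_pos i.2]
  exact DFunLike.congr_fun this a

lemma fwd_Yq (i : ℕ) : fwd k n (Yq k n i) = y k (Finset.Icc 1 (n - 1)) i := by
  unfold Yq
  split_ifs with h
  · simp only [fwd, RingQuot.liftAlgHom_mkAlgHom_apply, FreeAlgebra.lift_ι_apply]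
  · rw [map_zero, (y_rel k _).out]
    rw [Finset.mem_Icc]
    omega

lemma fwd_bwd (a) : fwd k n (bwd k n a) = a := by
  have : (fwd k n).comp (bwd k n) = AlgHom.id k _ := by
    apply N_hom_ext
    intro i
    simp [bwd, fwd_Yq]
  exact DFunLike.congr_fun this a

lemma Naug_bwd (a) : Naug k n (bwd k n a) = aug k _ a := by
  have : (Naug k n).comp (bwd k n) = aug k _ := by
    apply N_hom_ext
    intro i
    simp only [AlgHom.comp_apply, bwd, liftN_y, aug_y]
    unfold Yq
    split_ifs with h
    · simp only [Naug, RingQuot.liftAlgHom_mkAlgHom_apply, FreeAlgebra.lift_ι_apply]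
    · simp
  exact DFunLike.congr_fun this a

theorem final (hn : 2 ≤ n) (d : ℕ) :
    letI : Module (Nring k n) k := Module.compHom k (Naug k n).toRingHom
    Module.rank k
      (((Ext k (ModuleCat (Nring k n)) d).obj
          (Opposite.op (ModuleCat.of (Nring k n) k))).obj
        (ModuleCat.of (Nring k n) k)) = ((d + n - 2).choose (n - 2)) := by
  letI : Module (Nring k n) k := Module.compHom k (Naug k n).toRingHom
  have hsm : ∀ (a : Nring k n) (x : k), a • x = Naug k n a * x := fun _ _ => rfl
  haveI : SMulCommClass (Nring k n) k k := ⟨fun a b c => by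
    simp only [hsm, smul_eq_mul]; ring⟩
  have hs : ∀ (c x : k), algebraMap k (Nring k n) c • x = c * x := fun c x => by
    rw [hsm]; simp
  let P := projectiveResolution (ModuleCat.of (Nring k n) k)
  have h1 := ext_rank k hs P d
  refine h1.trans ?_
  let C : ℕ → Type := fun m => (Mob k P m : Type)
  let i : N k (Finset.Icc 1 (n - 1)) →+* Nring k n := (bwd k n).toRingHom
  letI : ∀ m, Module (N k (Finset.Icc 1 (n - 1))) (C m) := fun m => Module.compHom (Mob k P m) i
  have hc : ∀ m (b : N k (Finset.Icc 1 (n - 1))) (x : C m), b • x = i b • x := fun _ _ _ => rfl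
  let D : ∀ m, C (m + 1) →ₗ[Nring k n] C m := Md k P
  have hD : IsRes D := Md_res k P
  let D' : ∀ m, C (m + 1) →ₗ[N k (Finset.Icc 1 (n - 1))] C m := fun m =>
    { toFun := D m, map_add' := (D m).map_add, map_smul' := fun b x => (D m).map_smul (i b) x }
  have hD' : IsRes D' := 
    { exact := hD.exact
      surj := hD.surj
      proj := fun m => by
        haveI := hD.proj m
        refine proj_restrict i (hc (m + 1)) ?_
        letI : Module (N k (Finset.Icc 1 (n - 1))) (Nring k n) := Module.compHom (Nring k n) i
        exact Module.Free.of_equiv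
          ({ toFun := fun a => bwd k n a, invFun := fun a => fwd k n a, 
             map_add' := map_add _, map_smul' := fun a b => map_mul (bwd k n) a b
             left_inv := fwd_bwd k n, right_inv := bwd_fwd k n } :
            N k (Finset.Icc 1 (n - 1)) ≃ₗ[N k (Finset.Icc 1 (n - 1))] Nring k n) }
  have hdd : ∀ (b : N k (Finset.Icc 1 (n - 1))) (v : k), i b • v = b • v := fun b v => by
    rw [hsm, triv_smul, ← Naug_bwd]; rfl
  have h2 := shapiro_rank k (V := k) i (D := D) (D' := D') hc (fun _ _ => rfl) LinearMap.id hdd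
    (by
      intro g hg
      refine ⟨g 1, fun a => ?_⟩
      have := hg (fwd k n a) 1
      rw [← hdd] at this
      have hia : i (fwd k n a) = a := bwd_fwd k n a
      rw [hia, mul_one] at this
      exact this)
    (by
      intro v h
      simpa using h 1)
    hD hD' d
  refine h2.trans ?_
  have h3 := main_rank k (n - 1) (Finset.Icc 1 (n - 1)) (by simp) C D' hD'
    ({ toFun := fun x => x, invFun := fun x => x, map_add' := fun _ _ => rfl,
       map_smul' := fun b x => hdd b x, left_inv := fun _ => rfl, right_inv := fun _ => rfl }) d
  rw [h3, Nat.multichoose_eq]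
  congr 1
  obtain ⟨m, rfl⟩ := Nat.exists_eq_add_of_le hn
  have e1 : 2 + m - 1 + d - 1 = m + d := by omega
  have e2 : d + (2 + m) - 2 = m + d := by omega
  have e3 : 2 + m - 2 = m := by omega
  rw [e1, e2, e3, Nat.choose_symm_add]

end Final
end NilCox

open CategoryTheory in
/-- For the trivial `kN(n)`-module `k` (each `Y_i` acting as zero), the
`k`-vector space `Ext^d_{kN(n)}(k, k)` has dimension `(d + n - 2).choose (n - 2)`. -/
theorem Nring_ext_rank_choose (n : ℕ) (hn : 2 ≤ n) (d : ℕ) :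
    letI : Module (Nring k n) k := Module.compHom k (Naug k n).toRingHom
    Module.rank k
      (((Ext k (ModuleCat (Nring k n)) d).obj
          (Opposite.op (ModuleCat.of (Nring k n) k))).obj
        (ModuleCat.of (Nring k n) k)) = ((d + n - 2).choose (n - 2)) := by
  exact NilCox.final k n hn d
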